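/- arXiv:1904.10371 — 2 statements merged into one kernel-verified Lean document; each statement's English description precedes it below -/
import Mathlib

section
/- Let g : [0,∞) → [0,∞) be lower semicontinuous with g(0) = g**(0), where g**(x) := sup{a·x + b : a,b ∈ ℝ and a·z + b ≤ g(|z|) for all z ∈ ℝ} is the convex envelope (bipolar) of the even extension of g, and assume M := liminf_{s→∞} g(s)/s > 0. Let h : ℝ → ℝ be convex with min{|h′₋(0)|, |h′₊(0)|} < N·M/R, and let μ : [0,R] → (0,+∞] be nondecreasing. Then the (possibly nonconvex) functional F(u) := ∫₀^R r^{N−1}[g(|u′(r)|) + h(u(r))] dr attains its minimum on 𝒲_μ. -/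
open MeasureTheory Set Filter
open scoped ENNReal

noncomputable section

/-- The space `𝒲` of functions `u` on `(0,R]`, locally absolutely continuous on `(0,R]`
(encoded by the representation `u r = -∫_r^R u'`), with `u R = 0` and
`r ↦ r^(N-1) |u' r|` in `L¹(0,R)`; `u'` is the a.e. derivative of `u`. -/
structure RadW (N : ℕ) (R : ℝ) where
  u : ℝ → ℝ
  u' : ℝ → ℝ
  integ : IntegrableOn (fun r : ℝ => r ^ (N - 1) * |u' r|) (Ioc 0 R)
  rep : ∀ r ∈ Ioc (0:ℝ) R, u r = -∫ ρ in Ioc r R, u' ρ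

/-- Membership in `𝒲_μ`: the gradient constraint `|u'(r)| ≤ μ(r)` a.e. on `(0,R)`. -/
def memWmu (N : ℕ) (R : ℝ) (μ : ℝ → ℝ≥0∞) (u : RadW N R) : Prop :=
  ∀ᵐ r ∂(volume.restrict (Ioc (0:ℝ) R)), ENNReal.ofReal |u.u' r| ≤ μ r

/-- The extended-real integral `∫ f = ∫⁻ f⁺ - ∫⁻ f⁻`, with values in `[-∞,+∞]`. -/
def ERInt (f : ℝ → ℝ) (s : Set ℝ) : EReal :=
  ((∫⁻ x in s, ENNReal.ofReal (f x) : ℝ≥0∞) : EReal)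
    - ((∫⁻ x in s, ENNReal.ofReal (-f x) : ℝ≥0∞) : EReal)

/-- The radial functional `F(u) = ∫₀^R r^(N-1) [g(|u'(r)|) + h(u(r))] dr`. -/
def Fcon (N : ℕ) (R : ℝ) (g h : ℝ → ℝ) (u : RadW N R) : EReal :=
  ERInt (fun r : ℝ => r ^ (N - 1) * (g |u.u' r| + h (u.u r))) (Ioc 0 R)

/-- The constant `M := lim_{s→∞} g(s)/s ∈ (-∞,+∞]` (realized as a liminf in `[-∞,+∞]`;
the limit exists by convexity). -/
def MconstE (g : ℝ → ℝ) : EReal :=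
  Filter.liminf (fun s : ℝ => ((g s / s : ℝ) : EReal)) Filter.atTop

/-- The right derivative `h'₊(0)` of a convex function `h` at `0`,
`h'₊(0) = inf_{t > 0} (h(t) - h(0))/t`. -/
def rightD (h : ℝ → ℝ) : ℝ := sInf ((fun t : ℝ => (h t - h 0) / t) '' Ioi 0)

/-- The left derivative `h'₋(0)` of a convex function `h` at `0`,
`h'₋(0) = sup_{t < 0} (h(t) - h(0))/t`. -/
def leftD (h : ℝ → ℝ) : ℝ := sSup ((fun t : ℝ => (h t - h 0) / t) '' Iio 0)

/-- The convex envelope (bipolar) `g**` of the even extension of `g`: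
`g**(x) = sup {a x + b : a z + b ≤ g(|z|) for all z}`. -/
def biconj (g : ℝ → ℝ) (x : ℝ) : ℝ :=
  sSup {y : ℝ | ∃ a b : ℝ, (∀ z : ℝ, a * z + b ≤ g |z|) ∧ y = a * x + b}

def nuM (N : ℕ) (R : ℝ) : Measure ℝ :=
  (volume.restrict (Ioc (0:ℝ) R)).withDensity (fun r => ENNReal.ofReal (r ^ (N - 1)))

def Uf (R : ℝ) (w : ℝ → ℝ) (r : ℝ) : ℝ := ∫ ρ in Ioc r R, w ρ

lemma meas_dens (N : ℕ) : Measurable (fun r : ℝ => ENNReal.ofReal (r ^ (N - 1))) := by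
  fun_prop

lemma nuM_integrable_iff (N : ℕ) (R : ℝ) (f : ℝ → ℝ) :
    Integrable f (nuM N R) ↔ IntegrableOn (fun r => r ^ (N - 1) * f r) (Ioc 0 R) := by
  unfold nuM
  rw [integrable_withDensity_iff_integrable_smul' (meas_dens N) (by simp)]
  apply integrable_congr
  filter_upwards [ae_restrict_mem measurableSet_Ioc] with r hr
  rw [ENNReal.toReal_ofReal (pow_nonneg hr.1.le _), smul_eq_mul]

lemma nuM_integral (N : ℕ) (R : ℝ) (f : ℝ → ℝ) :
    ∫ r, f r ∂(nuM N R) = ∫ r in Ioc 0 R, r ^ (N - 1) * f r := by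
  unfold nuM
  rw [integral_withDensity_eq_integral_toReal_smul (meas_dens N) (by simp)]
  apply integral_congr_ae
  filter_upwards [ae_restrict_mem measurableSet_Ioc] with r hr
  rw [ENNReal.toReal_ofReal (pow_nonneg hr.1.le _), smul_eq_mul]

lemma nuM_ae_of (N : ℕ) (R : ℝ) {p : ℝ → Prop}
    (h : ∀ᵐ r ∂(volume.restrict (Ioc (0:ℝ) R)), p r) : ∀ᵐ r ∂(nuM N R), p r :=
  (withDensity_absolutelyContinuous _ _).ae_le h

lemma ae_of_nuM (N : ℕ) (R : ℝ) {p : ℝ → Prop}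
    (h : ∀ᵐ r ∂(nuM N R), p r) : ∀ᵐ r ∂(volume.restrict (Ioc (0:ℝ) R)), p r := by
  unfold nuM at h
  rw [ae_withDensity_iff (meas_dens N)] at h
  filter_upwards [h, ae_restrict_mem measurableSet_Ioc] with r hr hr2
  apply hr
  simp only [ne_eq, ENNReal.ofReal_eq_zero, not_le]
  exact pow_pos hr2.1 _

lemma nuM_ae_mem (N : ℕ) (R : ℝ) : ∀ᵐ r ∂(nuM N R), r ∈ Ioc 0 R :=
  nuM_ae_of N R (ae_restrict_mem measurableSet_Ioc)

instance (N : ℕ) (R : ℝ) : IsFiniteMeasure (nuM N R) := by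
  have : Integrable (fun _ => (1:ℝ)) (nuM N R) := by
    rw [nuM_integrable_iff]
    have : Continuous fun r : ℝ => r ^ (N-1) * 1 := by fun_prop
    exact (this.integrableOn_Icc (a := 0) (b := R)).mono_set Ioc_subset_Icc_self
  rw [integrable_const_iff] at this
  simpa using this

lemma nuM_Iic (N : ℕ) (hN : 1 ≤ N) (R : ℝ) {x : ℝ} (hx : x ∈ Icc 0 R) :
    nuM N R (Iic x) = ENNReal.ofReal (x ^ N / N) := by
  have h1 : (nuM N R).real (Iic x) = x ^ N / N := by
    rw [← integral_indicator_one measurableSet_Iic, nuM_integral]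
    have : ∀ r, r ^ (N-1) * (Iic x).indicator (1 : ℝ → ℝ) r = (Iic x).indicator (fun r => r^(N-1)) r := by
      intro r; by_cases hr : r ∈ Iic x <;> simp [hr]
    simp_rw [this]
    rw [setIntegral_indicator measurableSet_Iic]
    have : Ioc 0 R ∩ Iic x = Ioc 0 x := by
      ext r; simp only [mem_inter_iff, mem_Ioc, mem_Iic]; have := hx.2; grind
    rw [this, ← intervalIntegral.integral_of_le hx.1, integral_pow]
    obtain ⟨n, rfl⟩ : ∃ n, N = n + 1 := ⟨N - 1, by omega⟩
    simp
  rw [← h1, measureReal_def, ENNReal.ofReal_toReal (measure_ne_top _ _)]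

/-- the averaged multiplier -/
def Lam (N : ℕ) (q : ℝ → ℝ) (ρ : ℝ) : ℝ := ρ * ∫ t in (0:ℝ)..1, t ^ (N-1) * q (t * ρ)

lemma Lam_eq (N : ℕ) (q : ℝ → ℝ) {ρ : ℝ} (hρ : 0 < ρ) :
    ρ ^ (N-1) * Lam N q ρ = ∫ r in Ioc 0 ρ, r ^ (N-1) * q r := by
  rw [← intervalIntegral.integral_of_le hρ.le]
  have := intervalIntegral.smul_integral_comp_mul_left (a := 0) (b := 1)
    (fun r => r ^ (N-1) * q r) ρ
  rw [mul_zero, mul_one] at this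
  rw [← this, Lam, smul_eq_mul, mul_left_comm, ← intervalIntegral.integral_const_mul]
  congr 1
  apply intervalIntegral.integral_congr
  intro t _
  simp only [mul_pow]
  rw [mul_comm t ρ]; ring

lemma Lam_ii {N : ℕ} {q : ℝ → ℝ} {c : ℝ} (hq : Measurable q) (hq0 : ∀ r, 0 ≤ q r)
    (hqc : ∀ r, q r ≤ c) (ρ : ℝ) :
    IntervalIntegrable (fun t : ℝ => t ^ (N-1) * q (t * ρ)) volume 0 1 := by
  rw [intervalIntegrable_iff_integrableOn_Ioc_of_le zero_le_one]
  apply Measure.integrableOn_of_bounded (M := c) (by simp)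
  · exact (Measurable.aestronglyMeasurable (by fun_prop))
  · filter_upwards [ae_restrict_mem measurableSet_Ioc] with t ht
    rw [Real.norm_of_nonneg (mul_nonneg (pow_nonneg ht.1.le _) (hq0 _))]
    calc _ ≤ 1 * q (t * ρ) := mul_le_mul_of_nonneg_right (pow_le_one₀ ht.1.le ht.2) (hq0 _)
      _ ≤ c := by rw [one_mul]; exact hqc _

lemma Lam_nonneg {N : ℕ} {q : ℝ → ℝ} (hq0 : ∀ r, 0 ≤ q r) {ρ : ℝ} (hρ : 0 ≤ ρ) :
    0 ≤ Lam N q ρ := by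
  apply mul_nonneg hρ
  apply intervalIntegral.integral_nonneg zero_le_one
  intro t ht
  exact mul_nonneg (pow_nonneg ht.1 _) (hq0 _)

lemma Lam_mono {N : ℕ} {q : ℝ → ℝ} {c : ℝ} (hm : Monotone q) (hq0 : ∀ r, 0 ≤ q r)
    (hqc : ∀ r, q r ≤ c) {ρ σ : ℝ} (hρ : 0 ≤ ρ) (h : ρ ≤ σ) :
    Lam N q ρ ≤ Lam N q σ := by
  unfold Lam
  apply mul_le_mul h _ _ (hρ.trans h)
  · apply intervalIntegral.integral_mono_on zero_le_one (Lam_ii hm.measurable hq0 hqc _)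
      (Lam_ii hm.measurable hq0 hqc _)
    intro t ht
    exact mul_le_mul_of_nonneg_left (hm (mul_le_mul_of_nonneg_left h ht.1)) (pow_nonneg ht.1 _)
  · apply intervalIntegral.integral_nonneg zero_le_one
    intro t ht
    exact mul_nonneg (pow_nonneg ht.1 _) (hq0 _)

lemma Lam_one (N : ℕ) (hN : 1 ≤ N) (ρ : ℝ) : Lam N (fun _ => 1) ρ = ρ / N := by
  obtain ⟨n, rfl⟩ : ∃ n, N = n + 1 := ⟨N - 1, by omega⟩
  simp [Lam, div_eq_mul_inv]

lemma fubini_U (N : ℕ) (R : ℝ) {v q : ℝ → ℝ} {c : ℝ} (hvm : Measurable v)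
    (hv : Integrable v (nuM N R)) (hqm : Measurable q) (hq : ∀ r, |q r| ≤ c) :
    Integrable (fun r => q r * Uf R v r) (nuM N R) ∧
    ∫ r, q r * Uf R v r ∂(nuM N R) = ∫ r, Lam N q r * v r ∂(nuM N R) := by
  set m := volume.restrict (Ioc (0:ℝ) R) with hm
  let F : ℝ → ℝ → ℝ := fun r ρ => r ^ (N-1) * q r * ((Ici ρ)ᶜ.indicator (fun _ => v ρ) r)
  have hFm : Measurable (Function.uncurry F) := by
    have : Function.uncurry F = fun z : ℝ × ℝ => z.1 ^ (N-1) * q z.1 *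
        ({z : ℝ × ℝ | z.1 < z.2}.indicator (fun z => v z.2) z) := by
      ext ⟨r, ρ⟩
      by_cases h : r < ρ <;> simp [F, Function.uncurry, h, indicator]
    rw [this]
    have : Measurable ({z : ℝ × ℝ | z.1 < z.2}.indicator (fun z => v z.2)) :=
      (hvm.comp measurable_snd).indicator (measurableSet_lt measurable_fst measurable_snd)
    fun_prop
  have hc : 0 ≤ c := (abs_nonneg _).trans (hq 0)
  have hvi : Integrable (fun ρ => ρ ^ (N-1) * v ρ) m := (nuM_integrable_iff N R v).1 hv
  have hFi : Integrable (Function.uncurry F) (m.prod m) := by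
    have h1 : Integrable (fun z : ℝ × ℝ => c * |z.2 ^ (N-1) * v z.2|) (m.prod m) :=
      Integrable.mul_prod (f := fun _ : ℝ => c) (g := fun ρ : ℝ => |ρ ^ (N-1) * v ρ|)
        (by simp [hm]) hvi.abs
    apply h1.mono' hFm.aestronglyMeasurable
    have : m.prod m = (volume.prod volume).restrict (Ioc 0 R ×ˢ Ioc 0 R) := by
      rw [hm, Measure.prod_restrict]
    rw [this]
    filter_upwards [ae_restrict_mem (measurableSet_Ioc.prod measurableSet_Ioc)] with z hz
    obtain ⟨r, ρ⟩ := z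
    obtain ⟨hr, hρ⟩ := hz
    simp only at hr hρ
    by_cases h : r < ρ
    · simp only [Function.uncurry, F, Real.norm_eq_abs, indicator, mem_compl_iff, mem_Ici, not_le, h,
        if_true, abs_mul]
      rw [abs_of_nonneg (pow_nonneg hr.1.le _), abs_of_nonneg (pow_nonneg hρ.1.le _)]
      have h2 : r ^ (N-1) ≤ ρ ^ (N-1) := pow_le_pow_left₀ hr.1.le h.le _
      calc r ^ (N-1) * |q r| * |v ρ| ≤ ρ ^ (N-1) * c * |v ρ| := by
            gcongr
            · exact pow_nonneg hρ.1.le _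
            · exact hq r
        _ = _ := by ring
    · simp [Function.uncurry, F, h, indicator]
      positivity
  have hin : ∀ r ∈ Ioc 0 R, ∫ ρ, F r ρ ∂m = r ^ (N-1) * (q r * Uf R v r) := by
    intro r hr
    simp only [F]
    rw [integral_const_mul, mul_assoc]
    congr 2
    have : ∀ ρ, (Ici ρ)ᶜ.indicator (fun _ => v ρ) r = (Ioi r).indicator v ρ := by
      intro ρ; simp [indicator]
    simp_rw [this]
    rw [hm, setIntegral_indicator measurableSet_Ioi, Uf]
    congr 2
    ext ρ; simp only [mem_inter_iff, mem_Ioc, mem_Ioi]; have := hr.1; grind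
  have hout : ∀ ρ ∈ Ioc 0 R, ∫ r, F r ρ ∂m = ρ ^ (N-1) * (Lam N q ρ * v ρ) := by
    intro ρ hρ
    rw [← mul_assoc, Lam_eq N q hρ.1, ← integral_mul_const]
    have : ∀ r, F r ρ = (Iio ρ).indicator (fun r => r ^ (N-1) * q r * v ρ) r := by
      intro r; by_cases h : r < ρ <;> simp [F, indicator, h]
    simp_rw [this]
    rw [hm, setIntegral_indicator measurableSet_Iio, integral_Ioc_eq_integral_Ioo (x := 0) (y := ρ)]
    congr 2
    ext r; simp only [mem_inter_iff, mem_Ioc, mem_Iio, mem_Ioo]; have := hρ.2; grind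
  constructor
  · rw [nuM_integrable_iff]
    refine hFi.integral_prod_left.congr ?_
    filter_upwards [ae_restrict_mem measurableSet_Ioc] with r hr
    exact hin r hr
  · rw [nuM_integral, nuM_integral]
    have := integral_integral_swap hFi
    have e1 : ∫ r in Ioc 0 R, r ^ (N-1) * (q r * Uf R v r) = ∫ r, ∫ ρ, F r ρ ∂m ∂m := by
      apply integral_congr_ae
      filter_upwards [ae_restrict_mem measurableSet_Ioc] with r hr
      exact (hin r hr).symm
    rw [e1, this]
    apply integral_congr_ae
    filter_upwards [ae_restrict_mem measurableSet_Ioc] with r hr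
    exact hout r hr

lemma HL_set {ν : Measure ℝ} [IsFiniteMeasure ν] {Λ : ℝ → ℝ≥0∞} (hΛ : Monotone Λ)
    {A B : Set ℝ} (hA : MeasurableSet A) (hB : MeasurableSet B) (hup : ∀ x y, x ∉ B → y ∈ B → x < y)
    (hAB : ν A = ν B) : ∫⁻ x in A, Λ x ∂ν ≤ ∫⁻ x in B, Λ x ∂ν := by
  have hd : ν (A \ B) = ν (B \ A) := by
    have h1 := measure_inter_add_sdiff (μ := ν) A hB
    have h2 := measure_inter_add_sdiff (μ := ν) B hA
    rw [inter_comm] at h2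
    rw [← h1, ← h2] at hAB
    exact (ENNReal.add_right_inj (measure_ne_top _ _)).1 hAB
  rw [← lintegral_inter_add_sdiff Λ A hB, ← lintegral_inter_add_sdiff Λ B hA, inter_comm B A]
  refine add_le_add le_rfl ?_
  set s := ⨆ x ∈ Bᶜ, Λ x with hs
  calc ∫⁻ x in A \ B, Λ x ∂ν ≤ ∫⁻ x in A \ B, s ∂ν := by
        apply setLIntegral_mono measurable_const
        intro x hx
        exact le_iSup₂_of_le x hx.2 le_rfl
    _ = s * ν (B \ A) := by rw [setLIntegral_const, hd]
    _ = ∫⁻ x in B \ A, s ∂ν := by rw [setLIntegral_const]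
    _ ≤ _ := by
        apply setLIntegral_mono hΛ.measurable
        intro y hy
        exact iSup₂_le fun x hx => hΛ (hup x y hx hy.1).le

lemma HL_ineq {ν : Measure ℝ} [IsFiniteMeasure ν] {Λ : ℝ → ℝ≥0∞} (hΛ : Monotone Λ)
    {w v : ℝ → ℝ} (hw : Measurable w) (hw0 : ∀ r, 0 ≤ w r) (hv0 : ∀ r, 0 ≤ v r) (hv : Monotone v)
    (hmap : ν.map w = ν.map v) :
    ∫⁻ x, Λ x * ENNReal.ofReal (w x) ∂ν ≤ ∫⁻ x, Λ x * ENNReal.ofReal (v x) ∂ν := by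
  have e : ∀ f : ℝ → ℝ, Measurable f → (∀ r, 0 ≤ f r) → ∫⁻ x, Λ x * ENNReal.ofReal (f x) ∂ν =
      ∫⁻ t in Ioi 0, ∫⁻ x in {a | t < f a}, Λ x ∂ν := by
    intro f hf hf0
    have := lintegral_withDensity_eq_lintegral_mul ν hΛ.measurable (g := fun x => ENNReal.ofReal (f x))
      (by fun_prop)
    simp only [Pi.mul_apply] at this
    rw [← this, lintegral_eq_lintegral_meas_lt _ (Eventually.of_forall hf0) hf.aemeasurable]
    apply lintegral_congr
    intro t
    rw [withDensity_apply _ (measurableSet_lt measurable_const hf)]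
  rw [e w hw hw0, e v hv.measurable hv0]
  apply lintegral_mono
  intro t
  apply HL_set hΛ (measurableSet_lt measurable_const hw) (measurableSet_lt measurable_const hv.measurable)
  · intro x y hx hy
    by_contra h
    simp only [mem_ofPred_eq, not_lt] at hx hy h
    exact absurd (hv h) (by linarith)
  · have h1 := congrArg (fun m => m (Ioi t)) hmap
    rw [Measure.map_apply hw measurableSet_Ioi, Measure.map_apply hv.measurable measurableSet_Ioi] at h1
    exact h1

lemma rearr (N : ℕ) (hN : 1 ≤ N) (R : ℝ) (hR : 0 < R) {L : ℝ} {μ : ℝ → ℝ≥0∞}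
    (hμ : MonotoneOn μ (Icc 0 R)) {w : ℝ → ℝ} (hw : Measurable w) (hw0 : ∀ r, 0 ≤ w r)
    (hwL : ∀ r, w r ≤ L) (hwμ : ∀ᵐ r ∂(nuM N R), ENNReal.ofReal (w r) ≤ μ r) :
    ∃ v : ℝ → ℝ, Monotone v ∧ (∀ r, 0 ≤ v r) ∧ (∀ r, v r ≤ L) ∧
      (∀ᵐ r ∂(nuM N R), ENNReal.ofReal (v r) ≤ μ r) ∧ (nuM N R).map w = (nuM N R).map v := by
  set ν := nuM N R with hν
  have hL : 0 ≤ L := (hw0 0).trans (hwL 0)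
  let S : ℝ → Set ℝ := fun r => {t | 0 ≤ t ∧ ν (Iic r) ≤ ν {x | w x ≤ t}}
  have hSL : ∀ r, L ∈ S r := fun r => ⟨hL, by
    have : {x | w x ≤ L} = univ := by ext x; simp [hwL]
    rw [this]; exact measure_mono (subset_univ _)⟩
  have hSb : ∀ r, BddBelow (S r) := fun r => ⟨0, fun t ht => ht.1⟩
  let v : ℝ → ℝ := fun r => sInf (S r)
  have hv0 : ∀ r, 0 ≤ v r := fun r => le_csInf ⟨L, hSL r⟩ fun t ht => ht.1
  have hvL : ∀ r, v r ≤ L := fun r => csInf_le (hSb r) (hSL r)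
  have hvm : Monotone v := by
    intro r s hrs
    exact csInf_le_csInf (hSb r) ⟨L, hSL s⟩ fun t ht =>
      ⟨ht.1, (measure_mono (Iic_subset_Iic.2 hrs)).trans ht.2⟩
  have hmem : ∀ r, ν (Iic r) ≤ ν {x | w x ≤ v r} := by
    intro r
    obtain ⟨u, hu1, hu2, hu3⟩ := exists_seq_tendsto_sInf ⟨L, hSL r⟩ (hSb r)
    have hint : {x | w x ≤ v r} = ⋂ n, {x | w x ≤ u n} := by
      ext x
      simp only [mem_ofPred_eq, mem_iInter]
      constructor
      · intro h n; exact h.trans (csInf_le (hSb r) (hu3 n))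
      · intro h; exact ge_of_tendsto' hu2 h
    have := tendsto_measure_iInter_atTop (μ := ν) (s := fun n => {x | w x ≤ u n})
      (fun n => (measurableSet_le hw measurable_const).nullMeasurableSet)
      (fun i j hij x hx => le_trans hx (hu1 hij)) ⟨0, measure_ne_top _ _⟩
    rw [hint]
    exact ge_of_tendsto' this fun n => (hu3 n).2
  have hiff : ∀ r t, 0 ≤ t → (v r ≤ t ↔ ν (Iic r) ≤ ν {x | w x ≤ t}) := by
    intro r t ht
    constructor
    · intro h
      exact (hmem r).trans (measure_mono fun x hx => le_trans hx h)
    · intro h; exact csInf_le (hSb r) ⟨ht, h⟩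
  refine ⟨v, hvm, hv0, hvL, ?_, ?_⟩
  · filter_upwards [nuM_ae_mem N R] with r hr
    by_contra hcon
    rw [not_le] at hcon
    have hfin : μ r ≠ ⊤ := ne_top_of_lt hcon
    set t := (μ r).toReal
    have ht : 0 ≤ t := ENNReal.toReal_nonneg
    have h1 : ¬ v r ≤ t := by
      rw [not_le]
      by_contra h
      rw [not_lt] at h
      have := ENNReal.ofReal_le_ofReal h
      rw [ENNReal.ofReal_toReal hfin] at this
      exact absurd hcon (not_lt.2 this)
    apply h1
    rw [hiff r t ht]
    apply measure_mono_ae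
    filter_upwards [hwμ, nuM_ae_mem N R] with s hs hs2 hs3
    have h3 : s ≤ r := hs3
    have h4 := hs.trans (hμ ⟨hs2.1.le, hs2.2⟩ ⟨hr.1.le, hr.2⟩ h3)
    show w s ≤ t
    exact (ENNReal.ofReal_le_iff_le_toReal hfin).1 h4
  · apply Measure.ext_of_Iic
    intro t
    rw [Measure.map_apply hw measurableSet_Iic, Measure.map_apply hvm.measurable measurableSet_Iic]
    by_cases ht : 0 ≤ t
    · set d := ν (w ⁻¹' Iic t) with hd
      have hset : v ⁻¹' Iic t = {r | ν (Iic r) ≤ d} := by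
        ext r; exact hiff r t ht
      rw [hset]
      have htot : ν univ = ENNReal.ofReal (R ^ N / N) := by
        rw [← nuM_Iic N hN R (right_mem_Icc.2 hR.le)]
        apply measure_congr
        filter_upwards [nuM_ae_mem N R] with r hr
        exact propext ⟨fun _ => hr.2, fun _ => trivial⟩
      have hN0 : (0:ℝ) < N := by exact_mod_cast hN
      have hdr : d.toReal ∈ Icc ((0:ℝ)^N / N) (R ^ N / N) := by
        constructor
        · rw [zero_pow (by omega), zero_div]; exact ENNReal.toReal_nonneg
        · apply ENNReal.toReal_le_of_le_ofReal (by positivity)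
          rw [← htot]; exact measure_mono (subset_univ _)
      have hcont : ContinuousOn (fun x : ℝ => x ^ N / N) (Icc 0 R) := by fun_prop
      obtain ⟨x, hx, hxd⟩ := intermediate_value_Icc hR.le hcont hdr
      replace hxd : x ^ N / N = d.toReal := hxd
      have hxd2 : ν (Iic x) = d := by
        rw [hν, nuM_Iic N hN R hx, hxd, ENNReal.ofReal_toReal (measure_ne_top _ _)]
      conv_lhs => rw [← hxd2]
      apply measure_congr
      filter_upwards [nuM_ae_mem N R] with r hr
      apply propext
      show r ≤ x ↔ ν (Iic r) ≤ d
      rw [← hxd2, hν, nuM_Iic N hN R hx, nuM_Iic N hN R ⟨hr.1.le, hr.2⟩,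
        ENNReal.ofReal_le_ofReal_iff (by have := hx.1; positivity),
        div_le_div_iff_of_pos_right hN0, pow_le_pow_iff_left₀ hr.1.le hx.1 (by omega)]
    · have h1 : w ⁻¹' Iic t = ∅ := by
        ext r; simp only [mem_preimage, mem_Iic, mem_empty_iff_false, iff_false]
        have := hw0 r; linarith
      have h2 : v ⁻¹' Iic t = ∅ := by
        ext r; simp only [mem_preimage, mem_Iic, mem_empty_iff_false, iff_false]
        have := hv0 r; linarith
      rw [h1, h2]

lemma helly {L : ℝ} (f : ℕ → ℝ → ℝ) (hm : ∀ n, Monotone (f n)) (h0 : ∀ n r, 0 ≤ f n r)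
    (hL : ∀ n r, f n r ≤ L) :
    ∃ φ : ℕ → ℕ, StrictMono φ ∧ ∃ g : ℝ → ℝ, Monotone g ∧ (∀ r, 0 ≤ g r) ∧ (∀ r, g r ≤ L) ∧
      ∀ᵐ r, Tendsto (fun n => f (φ n) r) atTop (nhds (g r)) := by
  have hK : IsCompact (Set.pi univ (fun _ : ℚ => Icc (0:ℝ) L)) :=
    isCompact_univ_pi fun _ => isCompact_Icc
  obtain ⟨F, hF, φ, hφ, hlim⟩ := hK.tendsto_subseq (x := fun n (q : ℚ) => f n q)
    (fun n q _ => ⟨h0 n q, hL n q⟩)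
  have hlim' : ∀ q : ℚ, Tendsto (fun n => f (φ n) q) atTop (nhds (F q)) := fun q =>
    (tendsto_pi_nhds.1 hlim) q
  have hF0 : ∀ q, 0 ≤ F q := fun q => (hF q trivial).1
  have hFL : ∀ q, F q ≤ L := fun q => (hF q trivial).2
  have hFm : Monotone F := fun p q hpq =>
    le_of_tendsto_of_tendsto' (hlim' p) (hlim' q) fun n => hm _ (by exact_mod_cast hpq)
  let S : ℝ → Set ℝ := fun x => F '' {q : ℚ | (q:ℝ) ≤ x}
  have hSn : ∀ x, (S x).Nonempty := fun x => by
    obtain ⟨q, hq⟩ := exists_rat_lt x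
    exact ⟨F q, q, hq.le, rfl⟩
  have hSb : ∀ x, BddAbove (S x) := fun x => ⟨L, by rintro _ ⟨q, _, rfl⟩; exact hFL q⟩
  let g : ℝ → ℝ := fun x => sSup (S x)
  have hgm : Monotone g := fun x y hxy =>
    csSup_le_csSup (hSb y) (hSn x) (image_mono fun q hq => le_trans hq hxy)
  refine ⟨φ, hφ, g, hgm, ?_, ?_, ?_⟩
  · intro r
    obtain ⟨q, hq⟩ := exists_rat_lt r
    exact (hF0 q).trans (le_csSup (hSb r) ⟨q, hq.le, rfl⟩)
  · intro r
    exact csSup_le (hSn r) (by rintro _ ⟨q, _, rfl⟩; exact hFL q)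
  · filter_upwards [hgm.countable_not_continuousAt.ae_notMem volume] with x hx
    have hc : ContinuousAt g x := by simpa using hx
    rw [Metric.tendsto_atTop]
    intro ε hε
    obtain ⟨δ, hδ, hgd⟩ := Metric.continuousAt_iff.1 hc (ε/2) (by linarith)
    obtain ⟨q2, h21, h22⟩ := exists_rat_btwn (show x < x + δ by linarith)
    obtain ⟨q1, h11, h12⟩ := exists_rat_btwn (show x - δ/2 < x by linarith)
    have e2 : F q2 ≤ g q2 := le_csSup (hSb _) ⟨q2, by simp, rfl⟩
    have e1 : g (x - δ/2) ≤ F q1 := csSup_le (hSn _) (by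
      rintro _ ⟨q, hq, rfl⟩
      have : (q:ℝ) ≤ q1 := le_trans hq h11.le
      exact hFm (by exact_mod_cast this))
    have d2 := hgd (x := (q2:ℝ)) (by rw [Real.dist_eq, abs_lt]; constructor <;> linarith)
    have d1 := hgd (x := x - δ/2) (by rw [Real.dist_eq, abs_lt]; constructor <;> linarith)
    rw [Real.dist_eq, abs_lt] at d1 d2
    obtain ⟨n2, hn2⟩ := Metric.tendsto_atTop.1 (hlim' q2) (ε/2) (by linarith)
    obtain ⟨n1, hn1⟩ := Metric.tendsto_atTop.1 (hlim' q1) (ε/2) (by linarith)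
    refine ⟨max n1 n2, fun n hn => ?_⟩
    have a1 := hn1 n ((le_max_left _ _).trans hn)
    have a2 := hn2 n ((le_max_right _ _).trans hn)
    rw [Real.dist_eq, abs_lt] at a1 a2 ⊢
    have b1 := hm (φ n) h12.le
    have b2 := hm (φ n) h21.le
    constructor <;> linarith

structure KH (k D : ℝ → ℝ) (c : ℝ) : Prop where
  c0 : 0 ≤ c
  cont : Continuous k
  mono : Monotone D
  lo : ∀ t, 0 ≤ t → -c ≤ D t
  hi : ∀ t, D t ≤ 0
  sub : ∀ s t, 0 ≤ s → 0 ≤ t → k t + D t * (s - t) ≤ k s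

lemma KH.le {k D : ℝ → ℝ} {c : ℝ} (H : KH k D c) {s t : ℝ} (hs : 0 ≤ s) (hst : s ≤ t) :
    k s ≤ k t + c * (t - s) := by
  have := H.sub t s (hs.trans hst) hs
  nlinarith [H.lo s hs]

lemma KH.anti {k D : ℝ → ℝ} {c : ℝ} (H : KH k D c) {s t : ℝ} (hs : 0 ≤ s) (hst : s ≤ t) :
    k t ≤ k s := by
  have := H.sub s t hs (hs.trans hst)
  nlinarith [H.hi t]

lemma Uf_nonneg {R : ℝ} {w : ℝ → ℝ} (hw : ∀ r, 0 ≤ w r) (r : ℝ) : 0 ≤ Uf R w r :=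
  integral_nonneg fun _ => hw _

lemma intOn_of_nuM {N : ℕ} {R : ℝ} {w : ℝ → ℝ} (hw : Measurable w) (hi : Integrable w (nuM N R))
    {r : ℝ} (hr : 0 < r) : IntegrableOn w (Ioc r R) := by
  rw [nuM_integrable_iff] at hi
  have h1 := (hi.mono_set (Ioc_subset_Ioc_left hr.le)).norm.const_mul ((r ^ (N-1))⁻¹)
  refine Integrable.mono' h1 hw.aestronglyMeasurable ?_
  filter_upwards [ae_restrict_mem measurableSet_Ioc] with ρ hρ
  have h2 : r ^ (N-1) ≤ ρ ^ (N-1) := pow_le_pow_left₀ hr.le hρ.1.le _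
  have h3 : 0 < r ^ (N-1) := pow_pos hr _
  rw [norm_mul, Real.norm_of_nonneg (h3.le.trans h2), ← mul_assoc]
  have : 1 ≤ (r ^ (N-1))⁻¹ * ρ ^ (N-1) := by
    rw [inv_mul_eq_div, one_le_div h3]; exact h2
  nlinarith [norm_nonneg (w ρ)]

lemma U_int {N : ℕ} {R : ℝ} {w : ℝ → ℝ} (hw : Measurable w) (hi : Integrable w (nuM N R)) :
    Integrable (Uf R w) (nuM N R) := by
  have := (fubini_U N R hw hi (q := fun _ => 1) (c := 1) measurable_const (by simp)).1
  simpa using this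

lemma kU_int {N : ℕ} {R : ℝ} {k D : ℝ → ℝ} {c : ℝ} (H : KH k D c) {w : ℝ → ℝ} (hw : Measurable w)
    (hw0 : ∀ r, 0 ≤ w r) (hi : Integrable w (nuM N R)) :
    Integrable (fun r => k (Uf R w r)) (nuM N R) := by
  have hU := U_int hw hi
  have h1 : Integrable (fun r => |k 0| + c * Uf R w r) (nuM N R) :=
    (integrable_const _).add (hU.const_mul c)
  apply h1.mono' (H.cont.comp_aestronglyMeasurable hU.aestronglyMeasurable)
  filter_upwards with r
  have hu := Uf_nonneg (R := R) hw0 r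
  have a1 := H.le le_rfl hu
  have a2 := H.anti le_rfl hu
  have := H.c0
  have h3 : 0 ≤ c * Uf R w r := by positivity
  rw [Real.norm_eq_abs, abs_le]
  constructor
  · linarith [neg_abs_le (k 0), le_abs_self (k 0)]
  · linarith [le_abs_self (k 0)]

lemma trunc {N : ℕ} (hN : 1 ≤ N) {R : ℝ} (hR : 0 < R) {k D γ : ℝ → ℝ} {c L : ℝ} (H : KH k D c)
    (hγm : Measurable γ) (hγ0 : ∀ s, 0 ≤ γ s) (hL0 : 0 ≤ L)
    (hL : ∀ s, 0 ≤ s → γ L - c * R / N * L ≤ γ s - c * R / N * s)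
    {w : ℝ → ℝ} (hw : Measurable w) (hw0 : ∀ r, 0 ≤ w r) (hi : Integrable w (nuM N R))
    (hγi : Integrable (fun r => γ (w r)) (nuM N R)) :
    Integrable (fun r => γ (min (w r) L)) (nuM N R) ∧
    ∫ r, (γ (min (w r) L) + k (Uf R (fun r => min (w r) L) r)) ∂(nuM N R)
      ≤ ∫ r, (γ (w r) + k (Uf R w r)) ∂(nuM N R) := by
  set ν := nuM N R
  have hN0 : (0:ℝ) < N := by exact_mod_cast hN
  have hc := H.c0
  set w1 : ℝ → ℝ := fun r => min (w r) L with hw1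
  have hw1m : Measurable w1 := hw.min measurable_const
  have hw10 : ∀ r, 0 ≤ w1 r := fun r => le_min (hw0 r) hL0
  have hle : ∀ r, w1 r ≤ w r := fun r => min_le_left _ _
  have hi1 : Integrable w1 ν := hi.mono' hw1m.aestronglyMeasurable (by
    filter_upwards with r
    rw [Real.norm_of_nonneg (hw10 r)]; exact hle r)
  have hpt : ∀ r, γ (w1 r) ≤ γ (w r) - c * R / N * (w r - w1 r) := by
    intro r
    rcases le_total (w r) L with h | h
    · simp [hw1, h]
    · simp only [hw1, min_eq_right h]
      have := hL (w r) (hw0 r); linarith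
  have hlam : 0 ≤ c * R / N := by positivity
  have hγ1 : Integrable (fun r => γ (w1 r)) ν := hγi.mono' (hγm.comp hw1m).aestronglyMeasurable (by
    filter_upwards with r
    rw [Real.norm_of_nonneg (hγ0 _)]
    have := hpt r
    have := mul_nonneg hlam (sub_nonneg.2 (hle r))
    linarith)
  refine ⟨hγ1, ?_⟩
  have hd := hi.sub hi1
  have hfub := (fubini_U N R (hw.sub hw1m) hd (q := fun _ => 1) (c := 1) measurable_const (by simp)).2
  simp only [one_mul] at hfub
  have hfi := U_int (hw.sub hw1m) hd
  have hkU := kU_int H hw hw0 hi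
  have hkU1 := kU_int H hw1m hw10 hi1
  rw [integral_add hγ1 hkU1, integral_add hγi hkU]
  have h1 : ∫ r, γ (w1 r) ∂ν ≤ ∫ r, γ (w r) ∂ν - c * R / N * ∫ r, (w - w1) r ∂ν := by
    rw [← integral_const_mul, ← integral_sub hγi (hd.const_mul _)]
    exact integral_mono hγ1 (hγi.sub (hd.const_mul _)) hpt
  have h2 : ∫ r, k (Uf R w1 r) ∂ν ≤ ∫ r, k (Uf R w r) ∂ν + c * ∫ r, Uf R (w - w1) r ∂ν := by
    rw [← integral_const_mul, ← integral_add hkU (hfi.const_mul _)]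
    apply integral_mono_ae hkU1 (hkU.add (hfi.const_mul _))
    filter_upwards [nuM_ae_mem N R] with r hr
    have i1 := intOn_of_nuM hw hi hr.1
    have i2 := intOn_of_nuM hw1m hi1 hr.1
    have e : Uf R (w - w1) r = Uf R w r - Uf R w1 r := integral_sub i1 i2
    show _ ≤ k (Uf R w r) + c * Uf R (w - w1) r
    rw [e]
    exact H.le (Uf_nonneg hw10 r) (integral_mono i2 i1 hle)
  have h3 : ∫ r, Uf R (w - w1) r ∂ν ≤ R / N * ∫ r, (w - w1) r ∂ν := by
    rw [hfub, ← integral_const_mul]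
    apply integral_mono_of_nonneg
    · filter_upwards [nuM_ae_mem N R] with r hr
      rw [Lam_one N hN]
      exact mul_nonneg (div_nonneg hr.1.le hN0.le) (sub_nonneg.2 (hle r))
    · exact hd.const_mul _
    · filter_upwards [nuM_ae_mem N R] with r hr
      rw [Lam_one N hN]
      have : r / N ≤ R / N := div_le_div_of_nonneg_right hr.2 hN0.le
      exact mul_le_mul_of_nonneg_right this (sub_nonneg.2 (hle r))
  have h4 := mul_le_mul_of_nonneg_left h3 hc
  have h5 : c * (R / N * ∫ r, (w - w1) r ∂ν) = c * R / N * ∫ r, (w - w1) r ∂ν := by ring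
  linarith

lemma bdd_int {N : ℕ} {R L : ℝ} {w : ℝ → ℝ} (hw : Measurable w) (hw0 : ∀ r, 0 ≤ w r)
    (hwL : ∀ r, w r ≤ L) : Integrable w (nuM N R) :=
  Integrable.of_bound hw.aestronglyMeasurable L (by
    filter_upwards with r
    rw [Real.norm_of_nonneg (hw0 r)]; exact hwL r)

lemma bdd_intOn {R L : ℝ} {w : ℝ → ℝ} (hw : Measurable w) (hw0 : ∀ r, 0 ≤ w r)
    (hwL : ∀ r, w r ≤ L) (r : ℝ) : IntegrableOn w (Ioc r R) :=
  Integrable.of_bound hw.aestronglyMeasurable L (by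
    filter_upwards with r
    rw [Real.norm_of_nonneg (hw0 r)]; exact hwL r)

lemma rearr_le {N : ℕ} {R : ℝ} {k D γ : ℝ → ℝ} {c L : ℝ} (H : KH k D c)
    (hγm : Measurable γ) {w v : ℝ → ℝ} (hw : Measurable w) (hw0 : ∀ r, 0 ≤ w r)
    (hwL : ∀ r, w r ≤ L) (hγi : Integrable (fun r => γ (w r)) (nuM N R))
    (hv : Monotone v) (hv0 : ∀ r, 0 ≤ v r) (hvL : ∀ r, v r ≤ L)
    (hmap : (nuM N R).map w = (nuM N R).map v) :
    Integrable (fun r => γ (v r)) (nuM N R) ∧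
    ∫ r, (γ (v r) + k (Uf R v r)) ∂(nuM N R) ≤ ∫ r, (γ (w r) + k (Uf R w r)) ∂(nuM N R) := by
  set ν := nuM N R
  have hwi : Integrable w ν := bdd_int hw hw0 hwL
  have hvi : Integrable v ν := bdd_int hv.measurable hv0 hvL
  have hγv : Integrable (fun r => γ (v r)) ν := by
    have h1 : Integrable γ (ν.map w) :=
      (integrable_map_measure hγm.aestronglyMeasurable hw.aemeasurable).2 hγi
    rw [hmap] at h1
    exact (integrable_map_measure hγm.aestronglyMeasurable hv.measurable.aemeasurable).1 h1
  have hγe : ∫ r, γ (v r) ∂ν = ∫ r, γ (w r) ∂ν := by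
    rw [← integral_map hw.aemeasurable hγm.aestronglyMeasurable, hmap,
      integral_map hv.measurable.aemeasurable hγm.aestronglyMeasurable]
  refine ⟨hγv, ?_⟩
  have hkw := kU_int H hw hw0 hwi
  have hkv := kU_int H hv.measurable hv0 hvi
  rw [integral_add hγv hkv, integral_add hγi hkw, hγe]
  have hUanti : Antitone (Uf R v) := by
    intro r s hrs
    exact setIntegral_mono_set (bdd_intOn hv.measurable hv0 hvL r)
      (Eventually.of_forall hv0) (Ioc_subset_Ioc_left hrs).eventuallyLE
  set q : ℝ → ℝ := fun r => - D (Uf R v r) with hq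
  have hqm : Monotone q := fun r s hrs => neg_le_neg (H.mono (hUanti hrs))
  have hq0 : ∀ r, 0 ≤ q r := fun r => neg_nonneg.2 (H.hi _)
  have hqc : ∀ r, q r ≤ c := fun r => by have := H.lo _ (Uf_nonneg (R := R) hv0 r); simp only [hq]; linarith
  have hqa : ∀ r, |q r| ≤ c := fun r => by rw [abs_of_nonneg (hq0 r)]; exact hqc r
  obtain ⟨iw, ew⟩ := fubini_U N R hw hwi hqm.measurable hqa
  obtain ⟨iv, ev⟩ := fubini_U N R hv.measurable hvi hqm.measurable hqa
  have h1 : ∫ r, k (Uf R v r) ∂ν ≤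
      ∫ r, k (Uf R w r) ∂ν + (∫ r, q r * Uf R w r ∂ν - ∫ r, q r * Uf R v r ∂ν) := by
    have isub : Integrable (fun r => q r * Uf R w r - q r * Uf R v r) ν := iw.sub iv
    rw [← integral_sub iw iv, ← integral_add hkw isub]
    apply integral_mono hkv (hkw.add isub)
    intro r
    have := H.sub (Uf R w r) (Uf R v r) (Uf_nonneg hw0 r) (Uf_nonneg hv0 r)
    simp only [hq]
    show _ ≤ k (Uf R w r) + (- D (Uf R v r) * Uf R w r - - D (Uf R v r) * Uf R v r)
    linarith
  have h2 : ∫ r, Lam N q r * w r ∂ν ≤ ∫ r, Lam N q r * v r ∂ν := by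
    let l : ℝ → ℝ := fun r => Lam N q (max r 0)
    have hlm : Monotone l := fun r s hrs =>
      Lam_mono hqm hq0 hqc (le_max_right _ _) (max_le_max_right _ hrs)
    have hl0 : ∀ r, 0 ≤ l r := fun r => Lam_nonneg hq0 (le_max_right _ _)
    have hlR : ∀ r, l (min r R) ≤ l R := fun r => hlm (min_le_right _ _)
    have conv : ∀ f : ℝ → ℝ, Measurable f → (∀ r, 0 ≤ f r) →
        ∫ r, Lam N q r * f r ∂ν =
          (∫⁻ r, ENNReal.ofReal (l r) * ENNReal.ofReal (f r) ∂ν).toReal := by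
      intro f hf hf0
      have : ∫ r, Lam N q r * f r ∂ν = ∫ r, l r * f r ∂ν := by
        apply integral_congr_ae
        filter_upwards [nuM_ae_mem N R] with r hr
        simp only [l, max_eq_left hr.1.le]
      rw [this, integral_eq_lintegral_of_nonneg_ae
        (Eventually.of_forall fun r => mul_nonneg (hl0 r) (hf0 r))
        (hlm.measurable.mul hf).aestronglyMeasurable]
      congr 1
      apply lintegral_congr
      intro r
      exact ENNReal.ofReal_mul (hl0 r)
    rw [conv w hw hw0, conv v hv.measurable hv0]
    apply ENNReal.toReal_mono
    · have hb : ∫⁻ r, ENNReal.ofReal (l r) * ENNReal.ofReal (v r) ∂ν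
          ≤ ∫⁻ r, ENNReal.ofReal (l R) * ENNReal.ofReal L ∂ν := by
        apply lintegral_mono_ae
        filter_upwards [nuM_ae_mem N R] with r hr
        exact mul_le_mul' (ENNReal.ofReal_le_ofReal (hlm hr.2)) (ENNReal.ofReal_le_ofReal (hvL r))
      refine ne_top_of_le_ne_top ?_ hb
      rw [lintegral_const]
      finiteness
    · exact HL_ineq (fun r s hrs => ENNReal.ofReal_le_ofReal (hlm hrs)) hw hw0 hv0 hv hmap
  linarith

lemma exists_min_K {N : ℕ} {R : ℝ} {k γ : ℝ → ℝ} {L C : ℝ} (hk : Continuous k)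
    (hγ : LowerSemicontinuous γ) (hL0 : 0 ≤ L) (μ : ℝ → ℝ≥0∞) :
    ∃ v : ℝ → ℝ, (Monotone v ∧ (∀ r, 0 ≤ v r) ∧ (∀ r, v r ≤ L) ∧
      (∀ᵐ r ∂(nuM N R), ENNReal.ofReal (v r) ≤ μ r)) ∧
      ∀ v' : ℝ → ℝ, (Monotone v' ∧ (∀ r, 0 ≤ v' r) ∧ (∀ r, v' r ≤ L) ∧
      (∀ᵐ r ∂(nuM N R), ENNReal.ofReal (v' r) ≤ μ r)) →
      ∫⁻ r, ENNReal.ofReal (γ (v r) + k (Uf R v r) + C) ∂(nuM N R) ≤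
      ∫⁻ r, ENNReal.ofReal (γ (v' r) + k (Uf R v' r) + C) ∂(nuM N R) := by
  set ν := nuM N R
  let K : Set (ℝ → ℝ) := {v | Monotone v ∧ (∀ r, 0 ≤ v r) ∧ (∀ r, v r ≤ L) ∧
      (∀ᵐ r ∂ν, ENNReal.ofReal (v r) ≤ μ r)}
  let J : (ℝ → ℝ) → ℝ≥0∞ := fun v => ∫⁻ r, ENNReal.ofReal (γ (v r) + k (Uf R v r) + C) ∂ν
  have hK0 : (fun _ => (0:ℝ)) ∈ K := ⟨monotone_const, fun _ => le_rfl, fun _ => hL0, by simp⟩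
  obtain ⟨a, -, ha2, ha3⟩ := exists_seq_tendsto_sInf (S := J '' K) ⟨_, _, hK0, rfl⟩ (OrderBot.bddBelow _)
  choose f hfK hfa using ha3
  obtain ⟨φ, hφ, v, hvm, hv0, hvL, hlim⟩ := helly f (fun n => (hfK n).1) (fun n => (hfK n).2.1)
    (fun n => (hfK n).2.2.1)
  have hlimν : ∀ᵐ r ∂ν, Tendsto (fun n => f (φ n) r) atTop (nhds (v r)) :=
    nuM_ae_of N R (ae_restrict_of_ae hlim)
  have hU : ∀ r, Tendsto (fun n => Uf R (f (φ n)) r) atTop (nhds (Uf R v r)) := by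
    intro r
    apply tendsto_integral_of_dominated_convergence (fun _ => L)
    · intro n; exact (hfK (φ n)).1.measurable.aestronglyMeasurable
    · simp
    · intro n
      filter_upwards with x
      rw [Real.norm_of_nonneg ((hfK (φ n)).2.1 x)]; exact (hfK (φ n)).2.2.1 x
    · exact ae_restrict_of_ae hlim
  have hvK : v ∈ K := by
    refine ⟨hvm, hv0, hvL, ?_⟩
    have : ∀ᵐ r ∂ν, ∀ n, ENNReal.ofReal (f (φ n) r) ≤ μ r :=
      ae_all_iff.2 fun n => (hfK (φ n)).2.2.2
    filter_upwards [this, hlimν] with r h1 h2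
    exact le_of_tendsto' ((ENNReal.continuous_ofReal.tendsto _).comp h2) h1
  let Φ : ℝ × ℝ → ℝ≥0∞ := fun z => ENNReal.ofReal (γ z.1 + k z.2 + C)
  have hΦ : LowerSemicontinuous Φ := by
    have h1 : LowerSemicontinuous (fun z : ℝ × ℝ => γ z.1 + (k z.2 + C)) :=
      (hγ.comp continuous_fst).add
        (Continuous.lowerSemicontinuous (by fun_prop))
    have := ENNReal.continuous_ofReal.comp_lowerSemicontinuous h1
      (fun _ _ h => ENNReal.ofReal_le_ofReal h)
    have e : Φ = ENNReal.ofReal ∘ fun z : ℝ × ℝ => γ z.1 + (k z.2 + C) := by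
      ext z; simp [Φ, add_assoc]
    rw [e]; exact this
  have hJ : J v ≤ sInf (J '' K) := by
    have hlimJ : Tendsto (fun n => J (f (φ n))) atTop (nhds (sInf (J '' K))) := by
      have := ha2.comp hφ.tendsto_atTop
      refine this.congr fun n => ?_
      simp only [Function.comp]
      exact (hfa (φ n)).symm
    calc J v ≤ ∫⁻ r, liminf (fun n => Φ (f (φ n) r, Uf R (f (φ n)) r)) atTop ∂ν := by
          apply lintegral_mono_ae
          filter_upwards [hlimν] with r hr
          have ht : Tendsto (fun n => (f (φ n) r, Uf R (f (φ n)) r)) atTop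
            (nhds (v r, Uf R v r)) := hr.prodMk_nhds (hU r)
          refine (hΦ.le_liminf (v r, Uf R v r)).trans ?_
          exact liminf_le_liminf_of_le ht
      _ ≤ liminf (fun n => ∫⁻ r, Φ (f (φ n) r, Uf R (f (φ n)) r) ∂ν) atTop := by
          apply lintegral_liminf_le'
          intro n
          have hm := (hfK (φ n)).1.measurable
          have h2 : AEMeasurable (fun r => Uf R (f (φ n)) r) ν :=
            (U_int hm (bdd_int hm (hfK (φ n)).2.1 (hfK (φ n)).2.2.1)).aestronglyMeasurable.aemeasurable
          exact hΦ.measurable.comp_aemeasurable (hm.aemeasurable.prodMk h2)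
      _ = sInf (J '' K) := hlimJ.liminf_eq
  exact ⟨v, hvK, fun v' hv' => hJ.trans (sInf_le ⟨v', hv', rfl⟩)⟩

lemma exists_G_min {N : ℕ} (hN : 1 ≤ N) {R : ℝ} (hR : 0 < R) {k D γ : ℝ → ℝ} {c L : ℝ}
    (H : KH k D c) (hγl : LowerSemicontinuous γ) (hγ0 : ∀ s, 0 ≤ γ s) (hL0 : 0 ≤ L)
    (hL : ∀ s, 0 ≤ s → γ L - c * R / N * L ≤ γ s - c * R / N * s)
    {μ : ℝ → ℝ≥0∞} (hμ : MonotoneOn μ (Icc 0 R)) :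
    ∃ v : ℝ → ℝ, Monotone v ∧ (∀ r, 0 ≤ v r) ∧ (∀ r, v r ≤ L) ∧
      (∀ᵐ r ∂(nuM N R), ENNReal.ofReal (v r) ≤ μ r) ∧ Integrable (fun r => γ (v r)) (nuM N R) ∧
      ∀ w : ℝ → ℝ, Measurable w → (∀ r, 0 ≤ w r) → Integrable w (nuM N R) →
        Integrable (fun r => γ (w r)) (nuM N R) →
        (∀ᵐ r ∂(nuM N R), ENNReal.ofReal (w r) ≤ μ r) →
        ∫ r, (γ (v r) + k (Uf R v r)) ∂(nuM N R) ≤ ∫ r, (γ (w r) + k (Uf R w r)) ∂(nuM N R) := by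
  have hγm : Measurable γ := hγl.measurable
  have hc := H.c0
  set C : ℝ := |k 0| + c * (L * R) with hC
  obtain ⟨v, ⟨hvm, hv0, hvL, hvμ⟩, hmin⟩ := exists_min_K (N := N) (R := R) (C := C) H.cont hγl hL0 μ
  set ν := nuM N R
  have hnn : ∀ f : ℝ → ℝ, Monotone f → (∀ r, 0 ≤ f r) → (∀ r, f r ≤ L) →
      ∀ᵐ r ∂ν, 0 ≤ γ (f r) + k (Uf R f r) + C := by
    intro f hm h0 hfL
    filter_upwards [nuM_ae_mem N R] with r hr
    have hu : Uf R f r ≤ L * R := by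
      calc Uf R f r ≤ ∫ _ in Ioc r R, L := integral_mono (bdd_intOn hm.measurable h0 hfL r)
            (by simp) hfL
        _ = (R - r) * L := by simp [hr.2]
        _ ≤ L * R := by nlinarith [hr.1]
    have a1 := H.le le_rfl (Uf_nonneg (R := R) h0 r)
    have := hγ0 (f r)
    have := mul_le_mul_of_nonneg_left hu hc
    have := neg_abs_le (k 0)
    simp only [hC]; linarith
  have hkv := kU_int (N := N) (R := R) H hvm.measurable hv0 (bdd_int hvm.measurable hv0 hvL)
  have e : ∀ f : ℝ → ℝ, Monotone f → (∀ r, 0 ≤ f r) → (∀ r, f r ≤ L) →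
      Integrable (fun r => γ (f r)) ν →
      ∫⁻ r, ENNReal.ofReal (γ (f r) + k (Uf R f r) + C) ∂ν =
        ENNReal.ofReal (∫ r, (γ (f r) + k (Uf R f r)) ∂ν + ∫ _, C ∂ν) := by
    intro f hm h0 hfL hi
    have hk := kU_int (N := N) (R := R) H hm.measurable h0 (bdd_int hm.measurable h0 hfL)
    have hik : Integrable (fun r => γ (f r) + k (Uf R f r)) ν := hi.add hk
    rw [← integral_add hik (integrable_const C)]
    exact (ofReal_integral_eq_lintegral_ofReal (hik.add (integrable_const C)) (hnn f hm h0 hfL)).symm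
  have hvi : Integrable (fun r => γ (v r)) ν := by
    have h0 := hmin (fun _ => 0) ⟨monotone_const, fun _ => le_rfl, fun _ => hL0, by simp⟩
    have e0 := e (fun _ => 0) monotone_const (fun _ => le_rfl) (fun _ => hL0) (integrable_const _)
    rw [e0] at h0
    have h1 : Integrable (fun r => γ (v r) + k (Uf R v r) + C) ν := by
      refine ⟨(((hγm.comp hvm.measurable).aestronglyMeasurable.add hkv.aestronglyMeasurable).add
        aestronglyMeasurable_const), ?_⟩
      rw [hasFiniteIntegral_iff_ofReal (hnn v hvm hv0 hvL)]
      exact h0.trans_lt ENNReal.ofReal_lt_top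
    have h2 := (h1.sub (integrable_const C)).sub hkv
    refine h2.congr (Eventually.of_forall fun r => ?_)
    simp
  refine ⟨v, hvm, hv0, hvL, hvμ, hvi, ?_⟩
  intro w hw hw0 hwi hγw hwμ
  obtain ⟨hi1, hle1⟩ := trunc hN hR H hγm hγ0 hL0 hL hw hw0 hwi hγw
  set w1 : ℝ → ℝ := fun r => min (w r) L with hw1
  have hw1m : Measurable w1 := hw.min measurable_const
  have hw10 : ∀ r, 0 ≤ w1 r := fun r => le_min (hw0 r) hL0
  have hw1L : ∀ r, w1 r ≤ L := fun r => min_le_right _ _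
  have hw1μ : ∀ᵐ r ∂ν, ENNReal.ofReal (w1 r) ≤ μ r := by
    filter_upwards [hwμ] with r hr
    exact (ENNReal.ofReal_le_ofReal (min_le_left _ _)).trans hr
  obtain ⟨z, hzm, hz0, hzL, hzμ, hmap⟩ := rearr N hN R hR hμ hw1m hw10 hw1L hw1μ
  obtain ⟨hzi, hle2⟩ := rearr_le H hγm hw1m hw10 hw1L hi1 hzm hz0 hzL hmap
  refine le_trans ?_ (hle2.trans hle1)
  have h3 := hmin z ⟨hzm, hz0, hzL, hzμ⟩
  rw [e v hvm hv0 hvL hvi, e z hzm hz0 hzL hzi] at h3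
  have hkz := kU_int (N := N) (R := R) H hzm.measurable hz0 (bdd_int hzm.measurable hz0 hzL)
  have hnz : 0 ≤ ∫ r, (γ (z r) + k (Uf R z r)) ∂ν + ∫ _, C ∂ν := by
    rw [← integral_add (f := fun r => γ (z r) + k (Uf R z r)) (hzi.add hkz) (integrable_const C)]
    exact integral_nonneg_of_ae (hnn z hzm hz0 hzL)
  rw [ENNReal.ofReal_le_ofReal_iff hnz] at h3
  linarith

lemma ERInt_mono {f g : ℝ → ℝ} {s : Set ℝ} (h : ∀ᵐ x ∂(volume.restrict s), f x ≤ g x) :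
    ERInt f s ≤ ERInt g s := by
  unfold ERInt
  apply EReal.sub_le_sub
  · apply EReal.coe_ennreal_le_coe_ennreal_iff.2
    apply lintegral_mono_ae
    filter_upwards [h] with x hx using ENNReal.ofReal_le_ofReal hx
  · apply EReal.coe_ennreal_le_coe_ennreal_iff.2
    apply lintegral_mono_ae
    filter_upwards [h] with x hx using ENNReal.ofReal_le_ofReal (by linarith)

lemma ERInt_eq {f : ℝ → ℝ} {s : Set ℝ} (h : IntegrableOn f s) :
    ERInt f s = ((∫ x in s, f x : ℝ) : EReal) := by
  unfold ERInt
  have h1 : (∫⁻ x in s, ENNReal.ofReal (f x)) ≠ ⊤ := (Integrable.lintegral_lt_top h).ne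
  have h2 : (∫⁻ x in s, ENNReal.ofReal (-f x)) ≠ ⊤ := (Integrable.lintegral_lt_top h.neg).ne
  have key : ∀ x : ℝ≥0∞, x ≠ ⊤ → ((x.toReal : ℝ) : EReal) = (x : EReal) := by
    intro x hx
    lift x to NNReal using hx
    rfl
  rw [integral_eq_lintegral_pos_part_sub_lintegral_neg_part h, EReal.coe_sub,
    key _ h1, key _ h2]

lemma ERInt_top {f φ : ℝ → ℝ} {s : Set ℝ} (hf : AEStronglyMeasurable f (volume.restrict s))
    (hφ : IntegrableOn φ s) (h : ∀ᵐ x ∂(volume.restrict s), φ x ≤ f x)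
    (hn : ¬ IntegrableOn f s) : ERInt f s = ⊤ := by
  have h2 : (∫⁻ x in s, ENNReal.ofReal (-f x)) ≠ ⊤ := by
    refine ne_top_of_le_ne_top (Integrable.lintegral_lt_top hφ.neg).ne ?_
    apply lintegral_mono_ae
    filter_upwards [h] with x hx using ENNReal.ofReal_le_ofReal (by simp; linarith)
  have h1 : (∫⁻ x in s, ENNReal.ofReal (f x)) = ⊤ := by
    by_contra h1
    apply hn
    refine ⟨hf, ?_⟩
    rw [hasFiniteIntegral_iff_norm]
    have : ∀ x, ENNReal.ofReal ‖f x‖ = ENNReal.ofReal (f x) + ENNReal.ofReal (-f x) := by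
      intro x
      rcases le_total 0 (f x) with h | h
      · rw [Real.norm_of_nonneg h, ENNReal.ofReal_of_nonpos (by linarith : -f x ≤ 0), add_zero]
      · rw [Real.norm_of_nonpos h, ENNReal.ofReal_of_nonpos h, zero_add]
    simp_rw [this]
    rw [lintegral_add_left' hf.aemeasurable.ennreal_ofReal]
    exact ENNReal.add_lt_top.2 ⟨lt_top_iff_ne_top.2 h1, lt_top_iff_ne_top.2 h2⟩
  unfold ERInt
  rw [h1, EReal.coe_ennreal_top]
  apply EReal.top_sub
  simpa using h2

lemma lower {N : ℕ} {R : ℝ} {k D g h : ℝ → ℝ} {c I : ℝ} {μ : ℝ → ℝ≥0∞} (H : KH k D c)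
    (hγm : Measurable (fun s => g |s|)) (hγ0 : ∀ s, 0 ≤ g |s|)
    (hkh : ∀ t x, 0 ≤ t → |x| ≤ t → k t ≤ h x)
    (hI : ∀ w, Measurable w → (∀ r,0≤w r) → Integrable w (nuM N R) →
      Integrable (fun r => g |w r|) (nuM N R) → (∀ᵐ r ∂nuM N R, ENNReal.ofReal (w r) ≤ μ r) →
      I ≤ ∫ r, (g |w r| + k (Uf R w r)) ∂nuM N R)
    (u : RadW N R) (hu : memWmu N R μ u) : (I : EReal) ≤ Fcon N R g h u := by
  have hm := u.integ.aestronglyMeasurable.aemeasurable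
  have hm2 : AEMeasurable (fun r => |u.u' r|) (volume.restrict (Ioc 0 R)) := by
    have : AEMeasurable (fun r => (r ^ (N-1))⁻¹ * (r ^ (N-1) * |u.u' r|))
        (volume.restrict (Ioc 0 R)) := by
      apply AEMeasurable.mul _ hm
      fun_prop
    apply this.congr
    filter_upwards [ae_restrict_mem measurableSet_Ioc] with r hr
    have : r ^ (N-1) ≠ 0 := (pow_pos hr.1 _).ne'
    field_simp
  set w : ℝ → ℝ := fun r => |hm2.mk _ r| with hw
  have hwm : Measurable w := hm2.measurable_mk.abs
  have hw0 : ∀ r, 0 ≤ w r := fun r => abs_nonneg _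
  have hwe : ∀ᵐ r ∂(volume.restrict (Ioc 0 R)), |u.u' r| = w r := by
    filter_upwards [hm2.ae_eq_mk] with r hr
    simp only [hw, ← hr, abs_abs]
  have hwi : Integrable w (nuM N R) := by
    rw [nuM_integrable_iff]
    apply u.integ.congr
    filter_upwards [hwe] with r hr
    rw [hr]
  have hwmu : ∀ᵐ r ∂nuM N R, ENNReal.ofReal (w r) ≤ μ r := by
    apply nuM_ae_of
    filter_upwards [hwe, hu] with r hr h2
    rw [← hr]; exact h2
  have hub : ∀ r ∈ Ioc 0 R, |u.u r| ≤ Uf R w r := by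
    intro r hr
    rw [u.rep r hr, abs_neg]
    have h1 : |∫ ρ in Ioc r R, u.u' ρ| ≤ ∫ ρ in Ioc r R, |u.u' ρ| := by
      have := norm_integral_le_integral_norm (μ := volume.restrict (Ioc r R)) u.u'
      simpa only [Real.norm_eq_abs] using this
    refine h1.trans (le_of_eq ?_)
    apply integral_congr_ae
    exact ae_restrict_of_ae_restrict_of_subset (Ioc_subset_Ioc_left hr.1.le) hwe
  set f : ℝ → ℝ := fun r => r ^ (N-1) * (g |w r| + k (Uf R w r)) with hf
  have hle : ERInt f (Ioc 0 R) ≤ Fcon N R g h u := by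
    apply ERInt_mono
    filter_upwards [hwe, ae_restrict_mem measurableSet_Ioc] with r hr hr2
    have e : |w r| = |u.u' r| := by rw [← hr, abs_abs]
    simp only [hf, e]
    apply mul_le_mul_of_nonneg_left _ (pow_nonneg hr2.1.le _)
    linarith [hkh _ _ (Uf_nonneg (R := R) hw0 r) (hub r hr2)]
  refine le_trans ?_ hle
  have hkU := kU_int H hwm hw0 hwi
  by_cases hγ : Integrable (fun r => g |w r|) (nuM N R)
  · have hs : Integrable (fun r => g |w r| + k (Uf R w r)) (nuM N R) := hγ.add hkU
    rw [ERInt_eq ((nuM_integrable_iff _ _ _).1 hs), ← nuM_integral]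
    exact EReal.coe_le_coe_iff.2 (hI w hwm hw0 hwi hγ hwmu)
  · have hkU' := (nuM_integrable_iff _ _ _).1 hkU
    have hgw : Measurable (fun r => g |w r|) := hγm.comp hwm
    rw [ERInt_top (φ := fun r => r ^ (N-1) * k (Uf R w r)) _ hkU']
    · exact le_top
    · filter_upwards [ae_restrict_mem measurableSet_Ioc] with r hr2
      simp only [hf]
      apply mul_le_mul_of_nonneg_left _ (pow_nonneg hr2.1.le _)
      linarith [hγ0 (w r)]
    · intro hc
      apply hγ
      have h1 := (nuM_integrable_iff N R _).2 hc
      have h2 := h1.sub hkU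
      refine h2.congr (by filter_upwards with r; simp)
    · have : AEStronglyMeasurable (fun r => r ^ (N-1) * g |w r| + r ^ (N-1) * k (Uf R w r))
          (volume.restrict (Ioc 0 R)) := by
        apply AEStronglyMeasurable.add _ hkU'.aestronglyMeasurable
        apply Measurable.aestronglyMeasurable
        apply Measurable.mul _ hgw
        fun_prop
      refine this.congr (by filter_upwards with r; simp only [hf]; ring)

lemma upper {N : ℕ} {R : ℝ} {k D g h : ℝ → ℝ} {c L : ℝ} {μ : ℝ → ℝ≥0∞} (H : KH k D c)
    {v v1 : ℝ → ℝ} (hv : Measurable v) (hv0 : ∀ r, 0 ≤ v r) (hvL : ∀ r, v r ≤ L)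
    (hv1 : Measurable v1) (hv10 : ∀ r, 0 ≤ v1 r) (hle : ∀ r, v1 r ≤ v r)
    (hg : ∀ r, g (v1 r) ≤ g (v r)) (hh : ∀ r ∈ Ioc 0 R, h (Uf R v1 r) ≤ k (Uf R v r))
    (hμ : ∀ᵐ r ∂nuM N R, ENNReal.ofReal (v r) ≤ μ r)
    (hγi : Integrable (fun r => g (v r)) (nuM N R)) :
    ∃ ubar : RadW N R, memWmu N R μ ubar ∧
      Fcon N R g h ubar ≤ ((∫ r, (g (v r) + k (Uf R v r)) ∂nuM N R : ℝ) : EReal) := by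
  have hi1 : Integrable v1 (nuM N R) := bdd_int hv1 hv10 (fun r => (hle r).trans (hvL r))
  refine ⟨⟨Uf R v1, fun r => - v1 r, ?_, ?_⟩, ?_, ?_⟩
  · rw [nuM_integrable_iff] at hi1
    refine hi1.congr (by filter_upwards with r; rw [abs_neg, abs_of_nonneg (hv10 r)])
  · intro r hr
    rw [integral_neg, neg_neg]; rfl
  · filter_upwards [ae_of_nuM N R hμ] with r hr
    rw [abs_neg, abs_of_nonneg (hv10 r)]
    exact (ENNReal.ofReal_le_ofReal (hle r)).trans hr
  · have hkU := kU_int (N := N) (R := R) H hv hv0 (bdd_int hv hv0 hvL)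
    have hs : Integrable (fun r => g (v r) + k (Uf R v r)) (nuM N R) := hγi.add hkU
    rw [nuM_integral, ← ERInt_eq ((nuM_integrable_iff _ _ _).1 hs)]
    apply ERInt_mono
    filter_upwards [ae_restrict_mem measurableSet_Ioc] with r hr2
    simp only [abs_neg, abs_of_nonneg (hv10 r)]
    apply mul_le_mul_of_nonneg_left _ (pow_nonneg hr2.1.le _)
    linarith [hg r, hh r hr2]

lemma clamp {R L t0 : ℝ} (hR : 0 < R) (ht0 : 0 ≤ t0) {v : ℝ → ℝ} (hv : Measurable v)
    (hv0 : ∀ r, 0 ≤ v r) (hvL : ∀ r, v r ≤ L) :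
    ∃ v1 : ℝ → ℝ, Measurable v1 ∧ (∀ r, v1 r = v r ∨ v1 r = 0) ∧
      ∀ r ∈ Ioc 0 R, Uf R v1 r = min (Uf R v r) t0 := by
  have hio := bdd_intOn (R := R) hv hv0 hvL
  have hanti : ∀ a b, a ≤ b → Uf R v b ≤ Uf R v a := by
    intro a b hab
    exact setIntegral_mono_set (hio a) (by filter_upwards with r using hv0 r)
      (Ioc_subset_Ioc_left hab).eventuallyLE
  by_cases hc : Uf R v 0 ≤ t0
  · refine ⟨v, hv, fun r => Or.inl rfl, fun r hr => ?_⟩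
    rw [min_eq_left]
    exact (hanti 0 r hr.1.le).trans hc
  · push Not at hc
    have hcont : ContinuousOn (Uf R v) (Icc 0 R) := by
      have h1 : ContinuousOn (fun x => ∫ t in x..R, v t) (uIcc 0 R) :=
        intervalIntegral.continuousOn_primitive_interval_left (by
          rw [uIcc_of_le hR.le, integrableOn_Icc_iff_integrableOn_Ioc]; exact hio 0)
      rw [uIcc_of_le hR.le] at h1
      apply h1.congr
      intro x hx
      exact (intervalIntegral.integral_of_le hx.2).symm
    have hR0 : Uf R v R = 0 := by simp [Uf]
    obtain ⟨r0, hr0, he⟩ := intermediate_value_Icc' hR.le hcont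
      (show t0 ∈ Icc (Uf R v R) (Uf R v 0) from ⟨by rw [hR0]; exact ht0, hc.le⟩)
    refine ⟨(Ioi r0).indicator v, hv.indicator measurableSet_Ioi, fun r => ?_, fun r hr => ?_⟩
    · by_cases h : r ∈ Ioi r0 <;> simp [h]
    · have e : Uf R ((Ioi r0).indicator v) r = Uf R v (max r r0) := by
        unfold Uf
        rw [setIntegral_indicator measurableSet_Ioi]
        congr 2
        ext x; simp only [mem_inter_iff, mem_Ioc, mem_Ioi, sup_lt_iff]; tauto
      rw [e]
      rcases le_total r r0 with h | h
      · rw [max_eq_right h, he, min_eq_right]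
        rw [← he]; exact hanti _ _ h
      · rw [max_eq_left h, min_eq_left]
        rw [← he]; exact hanti _ _ h

lemma KH_of_convex {k : ℝ → ℝ} {c : ℝ} (hk : ConvexOn ℝ univ k) (ha : Antitone k) (hc : 0 ≤ c)
    (hl : ∀ t, 0 ≤ t → k 0 - c * t ≤ k t) : KH k (fun t => derivWithin k (Ioi t) t) c := by
  have hin : ∀ x : ℝ, x ∈ interior (univ : Set ℝ) := by simp
  have hmono : Monotone (fun t => derivWithin k (Ioi t) t) := by
    intro x y hxy
    exact hk.monotoneOn_rightDeriv (hin x) (hin y) hxy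
  refine ⟨hc, ?_, hmono, ?_, ?_, ?_⟩
  · rw [← continuousOn_univ]
    exact hk.continuousOn isOpen_univ
  · intro t ht
    refine le_trans ?_ (hmono ht)
    show -c ≤ derivWithin k (Ioi 0) 0
    rw [hk.rightDeriv_eq_sInf_slope_of_mem_interior (hin 0)]
    apply le_csInf
    · exact ⟨_, 1, ⟨mem_univ _, one_pos⟩, rfl⟩
    · rintro _ ⟨y, ⟨-, hy⟩, rfl⟩
      rw [slope_def_field, le_div_iff₀ (by linarith)]
      have := hl y hy.le
      linarith
  · intro t
    have h1 := hk.rightDeriv_le_slope_of_mem_interior (hin t) (mem_univ (t+1)) (by linarith)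
    refine h1.trans ?_
    rw [slope_def_field]
    have := ha (show t ≤ t + 1 by linarith)
    simp
    linarith
  · intro s t _ _
    rcases lt_trichotomy s t with h | h | h
    · have h1 := hk.slope_le_leftDeriv_of_mem_interior (mem_univ s) (hin t) h
      have h2 := h1.trans (hk.leftDeriv_le_rightDeriv_of_mem_interior (hin t))
      rw [slope_def_field, div_le_iff₀ (by linarith)] at h2
      linarith
    · simp [h]
    · have h1 := hk.rightDeriv_le_slope_of_mem_interior (hin t) (mem_univ s) h
      rw [slope_def_field, le_div_iff₀ (by linarith)] at h1
      linarith

lemma exists_L {g : ℝ → ℝ} {lam : ℝ} (hglsc : LowerSemicontinuousOn g (Ici 0))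
    (hM : (lam : EReal) < MconstE g) :
    ∃ L, 0 ≤ L ∧ ∀ s, 0 ≤ s → g L - lam * L ≤ g s - lam * s := by
  obtain ⟨m, hm1, hm2⟩ := EReal.lt_iff_exists_real_btwn.1 hM
  have hm1' : lam < m := EReal.coe_lt_coe_iff.1 hm1
  have hev := eventually_lt_of_lt_liminf hm2
  obtain ⟨S, hS⟩ := eventually_atTop.1 hev
  set T := max (max S 1) (g 0 / (m - lam)) with hT
  have hT1 : 1 ≤ T := (le_max_right S 1).trans (le_max_left _ _)
  have hTS : S ≤ T := (le_max_left S 1).trans (le_max_left _ _)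
  have hbig : ∀ s, T ≤ s → g 0 ≤ g s - lam * s := by
    intro s hs
    have h1 : m < g s / s := EReal.coe_lt_coe_iff.1 (hS s (hTS.trans hs))
    have hs0 : 0 < s := by linarith
    rw [lt_div_iff₀ hs0] at h1
    have h2 : g 0 / (m - lam) ≤ s := (le_max_right _ _).trans hs
    rw [div_le_iff₀ (by linarith)] at h2
    linarith
  have hlsc : LowerSemicontinuousOn (fun s => g s + -(lam * s)) (Icc 0 T) := by
    apply LowerSemicontinuousOn.add
    · exact hglsc.mono Icc_subset_Ici_self
    · exact (Continuous.continuousOn (by fun_prop)).lowerSemicontinuousOn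
  obtain ⟨L, hLm, hL⟩ := hlsc.exists_isMinOn ⟨0, by simp; linarith⟩ isCompact_Icc
  refine ⟨L, hLm.1, fun s hs => ?_⟩
  have hL' : ∀ s ∈ Icc 0 T, g L + -(lam * L) ≤ g s + -(lam * s) := fun s hs => hL hs
  rcases le_total s T with h | h
  · have := hL' s ⟨hs, h⟩; linarith
  · have := hL' 0 ⟨le_rfl, by linarith⟩
    have := hbig s h
    linarith

lemma lt_M {N : ℕ} (hN : 1 ≤ N) {x : ℝ} {M : EReal} (h : (x : EReal) < ((N : ℝ) : EReal) * M) :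
    ((x / N : ℝ) : EReal) < M := by
  have hN0 : (0:ℝ) < N := by exact_mod_cast hN
  by_contra hc
  push Not at hc
  have h1 : ((N : ℝ) : EReal) * M ≤ ((N : ℝ) : EReal) * ((x / N : ℝ) : EReal) :=
    mul_le_mul_of_nonneg_left hc (by exact_mod_cast hN0.le)
  rw [← EReal.coe_mul, mul_div_cancel₀ _ hN0.ne'] at h1
  exact absurd h (not_lt.2 h1)

lemma core {N : ℕ} (hN : 1 ≤ N) {R : ℝ} (hR : 0 < R) {g h : ℝ → ℝ} {μ : ℝ → ℝ≥0∞}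
    (hgnonneg : ∀ s : ℝ, 0 ≤ s → 0 ≤ g s)
    (hglsc : LowerSemicontinuousOn g (Ici 0))
    (hg0 : ∀ s, 0 ≤ s → g 0 ≤ g s)
    (hh1 : ConvexOn ℝ univ h) {c : ℝ} (c0 : 0 ≤ c) (hc : ∀ t, h 0 - c * t ≤ h t)
    (hcM : ((c * R : ℝ) : EReal) < ((N : ℝ) : EReal) * MconstE g)
    (hμmono : MonotoneOn μ (Icc 0 R)) :
    ∃ ubar : RadW N R, memWmu N R μ ubar ∧
      ∀ u : RadW N R, memWmu N R μ u → Fcon N R g h ubar ≤ Fcon N R g h u := by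
  have hγl : LowerSemicontinuous (fun s => g |s|) := by
    rw [← lowerSemicontinuousOn_univ_iff]
    exact hglsc.comp continuous_abs.continuousOn (fun x _ => abs_nonneg x)
  have hγ0 : ∀ s, 0 ≤ g |s| := fun s => hgnonneg _ (abs_nonneg s)
  obtain ⟨L, hL0, hL⟩ := exists_L hglsc (lt_M hN hcM)
  have hLγ : ∀ s, 0 ≤ s → g |L| - c * R / N * L ≤ g |s| - c * R / N * s := by
    intro s hs
    rw [abs_of_nonneg hL0, abs_of_nonneg hs]; exact hL s hs
  have fin : ∀ k : ℝ → ℝ, ConvexOn ℝ univ k → Antitone k → (∀ t, 0 ≤ t → k 0 - c * t ≤ k t) →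
      (∀ t x, 0 ≤ t → |x| ≤ t → k t ≤ h x) →
      (∀ v : ℝ → ℝ, Measurable v → (∀ r, 0 ≤ v r) → (∀ r, v r ≤ L) →
        ∃ v1 : ℝ → ℝ, Measurable v1 ∧ (∀ r, v1 r = v r ∨ v1 r = 0) ∧
          ∀ r ∈ Ioc 0 R, h (Uf R v1 r) ≤ k (Uf R v r)) →
      ∃ ubar : RadW N R, memWmu N R μ ubar ∧
      ∀ u : RadW N R, memWmu N R μ u → Fcon N R g h ubar ≤ Fcon N R g h u := by
    intro k hkc hka hkl hkh hcl
    have H := KH_of_convex hkc hka c0 hkl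
    obtain ⟨v, hvm, hv0, hvL, hvμ, hvi, hmin⟩ :=
      exists_G_min (γ := fun s => g |s|) hN hR H hγl hγ0 hL0 hLγ hμmono
    obtain ⟨v1, hv1m, hv1, hv1h⟩ := hcl v hvm.measurable hv0 hvL
    have e : ∀ r, g |v r| = g (v r) := fun r => by rw [abs_of_nonneg (hv0 r)]
    have e1 : (fun r => g |v r|) = fun r => g (v r) := funext e
    obtain ⟨ubar, hub, hF⟩ := upper (N := N) (μ := μ) (g := g) (h := h) H hvm.measurable hv0 hvL hv1m
      (fun r => by rcases hv1 r with h | h <;> rw [h]; exact hv0 r)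
      (fun r => by rcases hv1 r with h | h <;> rw [h]; exact hv0 r)
      (fun r => by rcases hv1 r with h | h <;> rw [h]; exact hg0 _ (hv0 r))
      hv1h hvμ (by simpa only [e] using hvi)
    refine ⟨ubar, hub, fun u hu => hF.trans ?_⟩
    apply lower H hγl.measurable hγ0 hkh _ u hu
    intro w a1 a2 a3 a4 a5
    have := hmin w a1 a2 a3 a4 a5
    simpa only [e] using this
  have hmax : ∀ x y z, x ≤ y → y ≤ z → h y ≤ max (h x) (h z) := by
    intro x y z hxy hyz
    exact hh1.le_max_of_mem_Icc (mem_univ _) (mem_univ _) ⟨hxy, hyz⟩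
  by_cases hmin : ∃ t0, 0 ≤ t0 ∧ ∀ x, h t0 ≤ h x
  · obtain ⟨t0, ht0, hm⟩ := hmin
    have hanti : ∀ x y, x ≤ y → y ≤ t0 → h y ≤ h x := by
      intro x y hxy hy
      have := hmax x y t0 hxy hy
      rwa [max_eq_left (hm x)] at this
    apply fin (fun t => h (min t t0))
    · refine ⟨convex_univ, ?_⟩
      intro x _ y _ a b ha hb hab
      simp only [smul_eq_mul]
      have h1 := hh1.2 (mem_univ (min x t0)) (mem_univ (min y t0)) ha hb hab
      simp only [smul_eq_mul] at h1
      refine le_trans (hanti _ _ ?_ (min_le_right _ _)) h1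
      apply le_min
      · exact add_le_add (mul_le_mul_of_nonneg_left (min_le_left _ _) ha)
          (mul_le_mul_of_nonneg_left (min_le_left _ _) hb)
      · calc a * min x t0 + b * min y t0 ≤ a * t0 + b * t0 :=
            add_le_add (mul_le_mul_of_nonneg_left (min_le_right _ _) ha)
              (mul_le_mul_of_nonneg_left (min_le_right _ _) hb)
          _ = t0 := by rw [← add_mul, hab, one_mul]
    · intro x y hxy
      exact hanti _ _ (min_le_min_right _ hxy) (min_le_right _ _)
    · intro t ht
      simp only [min_eq_left ht0]
      have h1 := hc (min t t0)
      have := mul_le_mul_of_nonneg_left (min_le_left t t0) c0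
      linarith
    · intro t x ht hx
      show h (min t t0) ≤ h x
      rcases le_total t t0 with h1 | h1
      · rw [min_eq_left h1]
        exact hanti _ _ ((le_abs_self x).trans hx) h1
      · rw [min_eq_right h1]; exact hm x
    · intro v hv hv0 hvL
      obtain ⟨v1, a1, a2, a3⟩ := clamp hR ht0 hv hv0 hvL
      refine ⟨v1, a1, a2, fun r hr => ?_⟩
      rw [a3 r hr]
  · have hcont : Continuous h := by
      rw [← continuousOn_univ]; exact hh1.continuousOn isOpen_univ
    have hanti : Antitone h := by
      intro a b hab
      by_contra hlt
      push Not at hlt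
      apply hmin
      have hinc : ∀ x, b ≤ x → h b ≤ h x := by
        intro x hx
        have := hmax a b x hab hx
        rcases le_max_iff.1 this with h1 | h1
        · linarith
        · exact h1
      obtain ⟨t0, ht0, hm⟩ := (isCompact_Icc (a := (0:ℝ)) (b := max b 0)).exists_isMinOn
        ⟨0, by simp⟩ hcont.continuousOn
      have hm' : ∀ s ∈ Icc 0 (max b 0), h t0 ≤ h s := fun s hs => hm hs
      have hm0 : h t0 ≤ h 0 := hm' 0 (by simp)
      have hneg : ∀ x, x ≤ 0 → h 0 ≤ h x := by
        intro x hx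
        have := hc x
        nlinarith
      refine ⟨t0, ht0.1, fun x => ?_⟩
      rcases le_total x 0 with hx | hx
      · exact hm0.trans (hneg x hx)
      · rcases le_total x (max b 0) with h2 | h2
        · exact hm' x ⟨hx, h2⟩
        · have hb := hinc x ((le_max_left _ _).trans h2)
          rcases le_total b 0 with h3 | h3
          · exact (hm0.trans (hneg b h3)).trans hb
          · exact (hm' b ⟨h3, le_max_left _ _⟩).trans hb
    apply fin h hh1 hanti (fun t _ => hc t)
    · intro t x ht hx
      exact hanti ((le_abs_self x).trans hx)
    · intro v hv hv0 hvL
      exact ⟨v, hv, fun r => Or.inl rfl, fun r _ => le_rfl⟩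

def RadW.ng {N : ℕ} {R : ℝ} (u : RadW N R) : RadW N R where
  u := fun r => - u.u r
  u' := fun r => - u.u' r
  integ := by simpa only [abs_neg] using u.integ
  rep := by
    intro r hr
    rw [u.rep r hr, integral_neg]

lemma Fcon_ng {N : ℕ} {R : ℝ} (g h : ℝ → ℝ) (u : RadW N R) :
    Fcon N R g h u.ng = Fcon N R g (fun x => h (-x)) u := by
  simp only [Fcon, RadW.ng, abs_neg]

lemma memWmu_ng {N : ℕ} {R : ℝ} {μ : ℝ → ℝ≥0∞} {u : RadW N R} (hu : memWmu N R μ u) :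
    memWmu N R μ u.ng := by
  simpa only [memWmu, RadW.ng, abs_neg] using hu

lemma g0_le {g : ℝ → ℝ} (hgnonneg : ∀ s : ℝ, 0 ≤ s → 0 ≤ g s) (hgbic : biconj g 0 = g 0) :
    ∀ s, 0 ≤ s → g 0 ≤ g s := by
  intro s hs
  rw [← hgbic]
  apply csSup_le
  · exact ⟨0, 0, 0, fun z => by simpa using hgnonneg _ (abs_nonneg z), by simp⟩
  · rintro y ⟨a, b, hab, rfl⟩
    have h1 := hab s
    have h2 := hab (-s)
    rw [abs_neg] at h2
    rw [abs_of_nonneg hs] at h1 h2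
    linarith

lemma subgrad {h : ℝ → ℝ} (hh : ConvexOn ℝ univ h) :
    leftD h ≤ rightD h ∧ ∀ a, leftD h ≤ a → a ≤ rightD h → ∀ t, h 0 + a * t ≤ h t := by
  have hs : ∀ t s, t < 0 → 0 < s → (h t - h 0) / t ≤ (h s - h 0) / s := by
    intro t s ht hs
    have := hh.slope_mono_adjacent (mem_univ t) (mem_univ s) ht hs
    have e : (h t - h 0) / t = (h 0 - h t) / (0 - t) := by
      rw [← neg_div_neg_eq]; congr 1 <;> ring
    rw [e]; simpa using this
  have hb : BddBelow ((fun t : ℝ => (h t - h 0) / t) '' Ioi 0) := by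
    refine ⟨(h (-1) - h 0) / (-1), ?_⟩
    rintro _ ⟨s, hs1, rfl⟩
    exact hs _ _ (by norm_num) hs1
  have ha : BddAbove ((fun t : ℝ => (h t - h 0) / t) '' Iio 0) := by
    refine ⟨(h 1 - h 0) / 1, ?_⟩
    rintro _ ⟨s, hs1, rfl⟩
    exact hs _ _ hs1 one_pos
  refine ⟨?_, ?_⟩
  · refine csSup_le (Set.Nonempty.image _ ⟨-1, by simp⟩) ?_
    rintro _ ⟨t, ht, rfl⟩
    refine le_csInf (Set.Nonempty.image _ ⟨1, by simp⟩) ?_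
    rintro _ ⟨s, hs1, rfl⟩
    exact hs _ _ ht hs1
  · intro a h1 h2 t
    rcases lt_trichotomy t 0 with ht | ht | ht
    · have h3 : (h t - h 0) / t ≤ a := (le_csSup ha ⟨t, ht, rfl⟩).trans h1
      rw [div_le_iff_of_neg ht] at h3
      linarith
    · simp [ht]
    · have h3 : a ≤ (h t - h 0) / t := h2.trans (csInf_le hb ⟨t, ht, rfl⟩)
      rw [le_div_iff₀ ht] at h3
      linarith

/-- if `g : [0,∞) → [0,∞)` is lower semicontinuous with `g(0) = g**(0)` and
`M := liminf_{s→∞} g(s)/s > 0`, `h` is convex with `min{|h'₋(0)|,|h'₊(0)|} < N M / R`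
(written equivalently as `min{|h'₋(0)|,|h'₊(0)|} · R < N · M`), and `μ` is nondecreasing
and positive, then the (possibly nonconvex) functional `F` attains its minimum on `𝒲_μ`. -/
theorem nonconvex_exists_minimizer (N : ℕ) (hN : 1 ≤ N) (R : ℝ) (hR : 0 < R)
    (g h : ℝ → ℝ) (μ : ℝ → ℝ≥0∞)
    (hgnonneg : ∀ s : ℝ, 0 ≤ s → 0 ≤ g s)
    (hglsc : LowerSemicontinuousOn g (Ici 0))
    (hgbic : biconj g 0 = g 0)
    (hg2 : 0 < MconstE g)
    (hh1 : ConvexOn ℝ univ h)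
    (hhg : ((min |leftD h| |rightD h| * R : ℝ) : EReal) < ((N : ℝ) : EReal) * MconstE g)
    (hμmono : MonotoneOn μ (Icc 0 R)) (hμpos : ∀ r ∈ Icc (0:ℝ) R, 0 < μ r) :
    ∃ ubar : RadW N R, memWmu N R μ ubar ∧
      ∀ u : RadW N R, memWmu N R μ u → Fcon N R g h ubar ≤ Fcon N R g h u := by
  have hg0 := g0_le hgnonneg hgbic
  obtain ⟨hlr, hsub⟩ := subgrad hh1
  have hlt : ∀ x, x ≤ min |leftD h| |rightD h| →
      ((x * R : ℝ) : EReal) < ((N : ℝ) : EReal) * MconstE g := by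
    intro x hx
    refine lt_of_le_of_lt ?_ hhg
    exact EReal.coe_le_coe_iff.2 (mul_le_mul_of_nonneg_right hx hR.le)
  rcases le_or_gt (leftD h) 0 with hl | hl
  · rcases le_or_gt 0 (rightD h) with hr | hr
    · refine core hN hR hgnonneg hglsc hg0 hh1 le_rfl ?_ (hlt 0 (by positivity)) hμmono
      intro t
      have := hsub 0 hl hr t
      linarith
    · refine core hN hR hgnonneg hglsc hg0 hh1 (c := -rightD h) (by linarith) ?_ (hlt _ ?_) hμmono
      · intro t
        have := hsub _ hlr le_rfl t
        linarith
      · rw [abs_of_nonpos hl, abs_of_neg hr]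
        exact le_min (by linarith) le_rfl
  · have hr : 0 < rightD h := hl.trans_le hlr
    have hh2 : ConvexOn ℝ univ (fun x => h (-x)) := by
      refine ⟨convex_univ, ?_⟩
      intro x _ y _ a b ha hb hab
      have h1 := hh1.2 (mem_univ (-x)) (mem_univ (-y)) ha hb hab
      simp only [smul_eq_mul] at h1 ⊢
      refine le_trans (le_of_eq ?_) h1
      congr 1; ring
    obtain ⟨ub, hub, hF⟩ := core (μ := μ) hN hR hgnonneg hglsc hg0 hh2 (c := leftD h) hl.le
      (by
        intro t
        have := hsub _ le_rfl hlr (-t)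
        simp only [neg_zero]
        linarith)
      (hlt _ (by rw [abs_of_pos hl, abs_of_pos hr]; exact le_min le_rfl hlr)) hμmono
    refine ⟨ub.ng, memWmu_ng hub, fun u hu => ?_⟩
    rw [Fcon_ng]
    refine (hF u.ng (memWmu_ng hu)).trans (le_of_eq ?_)
    rw [← Fcon_ng]
    simp only [Fcon, RadW.ng, neg_neg]
end
end

section
/- Let ε ∈ (0, √(log 2)] and define h : ℝ → ℝ by h(u) = 4(u + ε) for u ≤ −ε and h(u) = 0 for u > −ε, and define ū : (0,2] → ℝ by ū(r) = r² − 1 − ε for r ∈ (0,1] and ū(r) = ε·log(r/2)/log 2 for r ∈ [1,2]. Then ∫₀² r·[ ū′(r)²/2 + h(ū(r)) ] dr = (ε² − log 2)/(2 log 2), and this value is ≤ 0 (strictly negative for ε < √(log 2)); in particular it is strictly smaller than the value 0 of the functional at the zero function. -/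
open MeasureTheory Set
open scoped ENNReal

noncomputable section

/-- an explicit non-convex minimizer. With `N = 2`, `R = 2`,
`g(s) = s²/2`, `ε ∈ (0, √(log 2)]`, `h(u) = 4(u+ε)` for `u ≤ -ε` and `h(u) = 0` for
`u > -ε`, and `ū(r) = r² - 1 - ε` on `(0,1]`, `ū(r) = ε log(r/2)/log 2` on `[1,2]`
(with a.e. derivative `ū'(r) = 2r` on `(0,1)`, `ū'(r) = ε/(r log 2)` on `(1,2)`), one has
`∫₀² r [ū'(r)²/2 + h(ū(r))] dr = (ε² - log 2)/(2 log 2) ≤ 0`, strictly negative when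
`ε < √(log 2)`; in particular the value is smaller than the value `0` at the zero
function. -/
theorem nonconvex_example_value (ε : ℝ) (hε : 0 < ε) (hε2 : ε ≤ Real.sqrt (Real.log 2))
    (h : ℝ → ℝ)
    (hhle : ∀ t : ℝ, t ≤ -ε → h t = 4 * (t + ε))
    (hhgt : ∀ t : ℝ, -ε < t → h t = 0)
    (u u' : ℝ → ℝ)
    (hu1 : ∀ r ∈ Ioc (0:ℝ) 1, u r = r ^ 2 - 1 - ε)
    (hu2 : ∀ r ∈ Icc (1:ℝ) 2, u r = ε * Real.log (r / 2) / Real.log 2)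
    (hu'1 : ∀ r ∈ Ioo (0:ℝ) 1, u' r = 2 * r)
    (hu'2 : ∀ r ∈ Ioo (1:ℝ) 2, u' r = ε / (r * Real.log 2)) :
    (∫ r in Ioc (0:ℝ) 2, r * ((u' r) ^ 2 / 2 + h (u r)))
        = (ε ^ 2 - Real.log 2) / (2 * Real.log 2) ∧
    (ε ^ 2 - Real.log 2) / (2 * Real.log 2) ≤ 0 ∧
    (ε < Real.sqrt (Real.log 2) → (ε ^ 2 - Real.log 2) / (2 * Real.log 2) < 0) := by
  have hL : 0 < Real.log 2 := Real.log_pos (by norm_num)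
  have e1 : ∀ r ∈ Ioo (0:ℝ) 1, r * ((u' r) ^ 2 / 2 + h (u r)) = 6 * r ^ 3 - 4 * r := by
    intro r hr
    have h1 : u r = r ^ 2 - 1 - ε := hu1 r ⟨hr.1, hr.2.le⟩
    have h2 : u r ≤ -ε := by rw [h1]; nlinarith [hr.1, hr.2]
    rw [hhle _ h2, h1, hu'1 r hr]; ring
  have e2 : ∀ r ∈ Ioo (1:ℝ) 2, r * ((u' r) ^ 2 / 2 + h (u r))
      = ε ^ 2 / (2 * Real.log 2 ^ 2) * r⁻¹ := by
    intro r hr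
    have hr0 : 0 < r := by linarith [hr.1]
    have h1 := hu2 r ⟨hr.1.le, hr.2.le⟩
    have hl : 0 < Real.log r := Real.log_pos hr.1
    have h2 : -ε < u r := by
      rw [h1, Real.log_div hr0.ne' (by norm_num), lt_div_iff₀ hL]
      nlinarith [mul_pos hε hl]
    rw [hhgt _ h2, hu'2 r hr]
    field_simp
    ring
  have i1 : ∫ r in Ioo (0:ℝ) 1, r * ((u' r) ^ 2 / 2 + h (u r)) = -1 / 2 := by
    rw [setIntegral_congr_fun measurableSet_Ioo e1, ← integral_Ioc_eq_integral_Ioo,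
      ← intervalIntegral.integral_of_le zero_le_one, intervalIntegral.integral_sub
        (Continuous.intervalIntegrable (by fun_prop) _ _)
        (Continuous.intervalIntegrable (by fun_prop) _ _)]
    rw [intervalIntegral.integral_const_mul, intervalIntegral.integral_const_mul (4:ℝ) (fun x => x),
      integral_pow, integral_id]
    norm_num
  have i2 : ∫ r in Ioo (1:ℝ) 2, r * ((u' r) ^ 2 / 2 + h (u r)) = ε ^ 2 / (2 * Real.log 2) := by
    rw [setIntegral_congr_fun measurableSet_Ioo e2, ← integral_Ioc_eq_integral_Ioo,
      ← intervalIntegral.integral_of_le one_le_two, intervalIntegral.integral_const_mul,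
      integral_inv_of_pos one_pos two_pos, div_one]
    field_simp
  have n1 : IntegrableOn (fun r => r * ((u' r) ^ 2 / 2 + h (u r))) (Ioc (0:ℝ) 1) := by
    rw [integrableOn_Ioc_iff_integrableOn_Ioo, integrableOn_congr_fun e1 measurableSet_Ioo]
    exact ((by fun_prop : Continuous fun r : ℝ => 6 * r ^ 3 - 4 * r).integrableOn_Icc
      (a := 0) (b := 1)).mono_set Ioo_subset_Icc_self
  have n2 : IntegrableOn (fun r => r * ((u' r) ^ 2 / 2 + h (u r))) (Ioc (1:ℝ) 2) := by
    rw [integrableOn_Ioc_iff_integrableOn_Ioo, integrableOn_congr_fun e2 measurableSet_Ioo]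
    refine IntegrableOn.mono_set (ContinuousOn.integrableOn_Icc (a := 1) (b := 2) ?_)
      Ioo_subset_Icc_self
    refine continuousOn_const.mul (continuousOn_inv₀.mono ?_)
    intro x hx
    have : (0:ℝ) < x := by linarith [hx.1]
    exact this.ne'
  refine ⟨?_, ?_, ?_⟩
  · rw [← Ioc_union_Ioc_eq_Ioc zero_le_one one_le_two,
      setIntegral_union (Ioc_disjoint_Ioc_of_le le_rfl) measurableSet_Ioc n1 n2,
      integral_Ioc_eq_integral_Ioo, integral_Ioc_eq_integral_Ioo, i1, i2]
    field_simp
    ring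
  · apply div_nonpos_of_nonpos_of_nonneg _ (by positivity)
    have := (Real.le_sqrt hε.le hL.le).1 hε2
    linarith
  · intro hlt
    apply div_neg_of_neg_of_pos _ (by positivity)
    have := (Real.lt_sqrt hε.le).1 hlt
    linarith
end
end
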